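/- arXiv:2605.20100 — 4 statements merged into one kernel-verified Lean document; each statement's English description precedes it below -/
import Mathlib

section
/- There exists an absolute constant C such that for every s ∈ ℕ, all 1 ≤ m, n ≤ 2^s, and every z ∈ ℝ², the convolution of indicator functions satisfies (1_{R_m} ∗ 1_{R_n})(z) ≤ C · 2^{−3s} / (1 + |m − n|), and moreover (1_{R_m} ∗ 1_{R_n})(z) = 0 unless z ∈ R_m + R_n. -/
/-!
Write `δ = 2^{-s}` and `k = |m - n|`. A point `(u, v)` of `R_n` satisfies `|v - u²| < 10 δ²` and has
`u` within `2δ` of `I_n` (`parabolaNbhd_subset`). If `w = (u, v) ∈ R_m` and `z - w ∈ R_n` with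
`z = (a, b)`, adding the two vertical estimates gives `|b - u² - (a - u)²| ≤ 20 δ²`. The derivative
of `u ↦ u² + (a - u)²` is `2 (u - (a - u))`, of size about `kδ` and of constant sign once `k` is
larger than an absolute constant, so the admissible `u` lie in an interval of length `O(δ / k)`;
for small `k` the length `O(δ)` of `I_m` suffices (`abs_sub_mul_le`). Hence the set is contained in
a vertical strip of width `O(δ / (1 + k))` around the parabola, of height `O(δ²)`, and Fubini
(`volume_near_parabola_le`) bounds its area by `O(δ³ / (1 + k))`.
-/


open MeasureTheory Real Set Pointwise

/-- The parabola parametrization `Φ(x) = (x, x²)`, with `ℝ²` identified with `ℂ`. -/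
noncomputable def Phi (x : ℝ) : ℂ := ⟨x, x ^ 2⟩

/-- The closed `2^{−2s}`-neighborhood `R_n` of the parabola arc `Φ(I_n)`, where
`I_n = [(n−1)2^{−s}, n·2^{−s})`. -/
noncomputable def parabolaNbhd (s n : ℕ) : Set ℂ :=
  {z : ℂ | Metric.infDist z
      (Phi '' Set.Ico (((n : ℝ) - 1) * 2 ^ (-(s : ℤ))) ((n : ℝ) * 2 ^ (-(s : ℤ)))) ≤
    2 ^ (-(2 * s : ℤ))}

/-- The convolution `(1_{R_m} ∗ 1_{R_n})(z) = |R_m ∩ (z − R_n)|`. -/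
noncomputable def indicatorConv (s m n : ℕ) (z : ℂ) : ℝ :=
  (volume {w : ℂ | w ∈ parabolaNbhd s m ∧ z - w ∈ parabolaNbhd s n}).toReal

/-- A point of `R_n` lies within `2δ² ≤ 2δ` of the arc over `[(n - 1)δ, nδ)`; since the parabola is
Lipschitz over `[0, 1]`, it is also vertically close to the parabola. -/
lemma parabolaNbhd_subset {s n : ℕ} {δ : ℝ} (hδ : δ = 2 ^ (-(s : ℤ))) (hn1 : 1 ≤ n)
    (hn : n ≤ 2 ^ s) {w : ℂ} (hw : w ∈ parabolaNbhd s n) :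
    ((n : ℝ) - 3) * δ ≤ w.re ∧ w.re ≤ ((n : ℝ) + 2) * δ ∧ |w.im - w.re ^ 2| < 10 * δ ^ 2 := by
  have hδ0 : 0 < δ := by rw [hδ]; positivity
  have hδ1 : δ ≤ 1 := by
    rw [hδ, zpow_neg, zpow_natCast]
    exact inv_le_one_of_one_le₀ (one_le_pow₀ (by norm_num))
  have hsq : (2 : ℝ) ^ (-(2 * s : ℤ)) = δ ^ 2 := by
    rw [hδ, ← zpow_natCast, ← zpow_mul]; congr 1; push_cast; ring
  have hn1' : (1 : ℝ) ≤ n := by exact_mod_cast hn1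
  have hnδ : (n : ℝ) * δ ≤ 1 := by
    rw [hδ, zpow_neg, zpow_natCast, ← div_eq_mul_inv, div_le_one (by positivity)]
    exact_mod_cast hn
  simp only [parabolaNbhd, mem_ofPred_eq, hsq, ← hδ] at hw
  have hne : (Phi '' Set.Ico (((n : ℝ) - 1) * δ) ((n : ℝ) * δ)).Nonempty :=
    ⟨_, mem_image_of_mem _ (left_mem_Ico.2 (by nlinarith))⟩
  -- The infimum need not be attained on the half-open arc, hence the radius `2δ²`.
  obtain ⟨_, ⟨t, ⟨ht1, ht2⟩, rfl⟩, hd⟩ :=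
    (Metric.infDist_lt_iff (r := 2 * δ ^ 2) hne).1 (by nlinarith [sq_pos_of_pos hδ0])
  rw [dist_eq_norm] at hd
  have hre : |w.re - t| < 2 * δ ^ 2 := by
    simpa [Phi] using (Complex.abs_re_le_norm _).trans_lt hd
  have him : |w.im - t ^ 2| < 2 * δ ^ 2 := by
    simpa [Phi] using (Complex.abs_im_le_norm _).trans_lt hd
  have hδδ : δ ^ 2 ≤ δ := by nlinarith
  have ht0 : 0 ≤ t := by nlinarith
  have ht1' : t ≤ 1 := by linarith
  have hu := abs_lt.1 hre
  refine ⟨by nlinarith, by nlinarith, ?_⟩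
  have hsum : |w.re + t| ≤ 4 := abs_le.2 ⟨by linarith, by linarith⟩
  have hprod : |w.re ^ 2 - t ^ 2| ≤ 8 * δ ^ 2 := by
    have : w.re ^ 2 - t ^ 2 = (w.re - t) * (w.re + t) := by ring
    rw [this, abs_mul]
    calc _ ≤ (2 * δ ^ 2) * 4 := by gcongr
      _ = _ := by ring
  have h1 := abs_lt.1 him
  have h2 := abs_le.1 hprod
  exact abs_lt.2 ⟨by linarith, by linarith⟩

/-- Transversality: the values of `u ↦ u² + (a - u)²` at `u` and `u'` differ by
`(u - u') * 2 (u' - (a - u))`, and `u' - (a - u)` is within `5δ` of `(m - n)δ`. -/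
lemma abs_sub_mul_le {δ m n a b u u' : ℝ} (hδ : 0 < δ)
    (hu1 : (m - 3) * δ ≤ u) (hu2 : u ≤ (m + 2) * δ)
    (ha1 : (n - 3) * δ ≤ a - u) (ha2 : a - u ≤ (n + 2) * δ)
    (hb : |b - u ^ 2 - (a - u) ^ 2| ≤ 20 * δ ^ 2)
    (hu1' : (m - 3) * δ ≤ u') (hu2' : u' ≤ (m + 2) * δ)
    (hb' : |b - u' ^ 2 - (a - u') ^ 2| ≤ 20 * δ ^ 2) :
    |u - u'| * (1 + |m - n|) ≤ 80 * δ := by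
  rcases le_or_gt |m - n| 10 with hk | hk
  · have h5 : |u - u'| ≤ 5 * δ := abs_le.2 ⟨by linarith, by linarith⟩
    calc _ ≤ (5 * δ) * (1 + 10) := by gcongr
      _ ≤ _ := by linarith
  · have hdiff : |u - u'| * |2 * u - a + (2 * u' - a)| ≤ 40 * δ ^ 2 := by
      rw [← abs_mul]
      have h1 := abs_le.1 hb
      have h2 := abs_le.1 hb'
      exact abs_le.2 ⟨by linarith, by linarith⟩
    have hlow : |m - n| * δ ≤ |2 * u - a + (2 * u' - a)| := by
      rcases abs_cases (m - n) with ⟨h, -⟩ | ⟨h, -⟩ <;> rw [h] at hk ⊢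
      · refine le_trans ?_ (le_abs_self _)
        nlinarith [mul_lt_mul_of_pos_right hk hδ]
      · refine le_trans ?_ (neg_le_abs _)
        nlinarith [mul_lt_mul_of_pos_right hk hδ]
    have h1 : |u - u'| * |m - n| * δ ≤ 40 * δ * δ := by
      have := mul_le_mul_of_nonneg_left hlow (abs_nonneg (u - u'))
      linarith
    have h2 := le_of_mul_le_mul_right h1 hδ
    nlinarith [abs_nonneg (u - u')]

/-- Fubini for a vertical neighborhood of the parabola over an interval of length `2L`. -/
lemma volume_near_parabola_le {S : Set ℂ} {L c : ℝ} (hL : 0 ≤ L) (hc : 0 ≤ c)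
    (hS : ∀ w ∈ S, |w.im - w.re ^ 2| < c) (hSL : ∀ w ∈ S, ∀ w' ∈ S, |w.re - w'.re| ≤ L) :
    (volume S).toReal ≤ 2 * L * (2 * c) := by
  rcases S.eq_empty_or_nonempty with rfl | ⟨p, hp⟩
  · simp; positivity
  have hsub : S ⊆ Complex.measurableEquivRealProd ⁻¹'
      regionBetween (fun x => x ^ 2 - c) (fun x => x ^ 2 + c) (Icc (p.re - L) (p.re + L)) := by
    intro w hw
    have h1 := abs_lt.1 (hS w hw)
    have h2 := abs_le.1 (hSL w hw p hp)
    simp only [mem_preimage, regionBetween, mem_ofPred_eq, Complex.measurableEquivRealProd_apply,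
      mem_Icc, mem_Ioo]
    exact ⟨⟨by linarith, by linarith⟩, by linarith, by linarith⟩
  refine ENNReal.toReal_le_of_le_ofReal (by positivity) ((measure_mono hsub).trans ?_)
  rw [Complex.volume_preserving_equiv_real_prod.measure_preimage_equiv,
    Measure.volume_eq_prod,
    volume_regionBetween_eq_lintegral (by fun_prop) (by fun_prop) measurableSet_Icc]
  have : ∀ x : ℝ, ((fun x : ℝ => x ^ 2 + c) - (fun x : ℝ => x ^ 2 - c) : ℝ → ℝ) x = 2 * c := by
    intro x; rw [Pi.sub_apply]; ring
  simp only [this, lintegral_const, Measure.restrict_apply_univ, Real.volume_Icc]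
  rw [← ENNReal.ofReal_mul (by positivity)]
  exact ENNReal.ofReal_le_ofReal (by linarith)

/-- Size and support estimates for `1_{R_m} ∗ 1_{R_n}`. -/
theorem indicator_convolution_bound :
    ∃ C : ℝ, ∀ s : ℕ, ∀ m n : ℕ, 1 ≤ m → m ≤ 2 ^ s → 1 ≤ n → n ≤ 2 ^ s → ∀ z : ℂ,
      indicatorConv s m n z ≤ C * 2 ^ (-(3 * s : ℤ)) / (1 + |(m : ℝ) - (n : ℝ)|) ∧
      (z ∉ parabolaNbhd s m + parabolaNbhd s n → indicatorConv s m n z = 0) := by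
  refine ⟨3200, fun s m n hm1 hm hn1 hn z => ⟨?_, fun hz => ?_⟩⟩
  · obtain ⟨δ, hδ⟩ : ∃ δ : ℝ, δ = 2 ^ (-(s : ℤ)) := ⟨_, rfl⟩
    have hδ0 : 0 < δ := by rw [hδ]; positivity
    have hcube : (2 : ℝ) ^ (-(3 * s : ℤ)) = δ ^ 3 := by
      rw [hδ, ← zpow_natCast, ← zpow_mul]; congr 1; push_cast; ring
    have hvol := volume_near_parabola_le
      (S := {w : ℂ | w ∈ parabolaNbhd s m ∧ z - w ∈ parabolaNbhd s n})
      (L := 80 * δ / (1 + |(m : ℝ) - n|)) (c := 10 * δ ^ 2) (by positivity) (by positivity)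
      (fun w hw => (parabolaNbhd_subset hδ hm1 hm hw.1).2.2) ?_
    · rw [indicatorConv, hcube]
      refine hvol.trans (le_of_eq ?_)
      ring
    · have key : ∀ w : ℂ, w ∈ parabolaNbhd s m → z - w ∈ parabolaNbhd s n →
          |z.im - w.re ^ 2 - (z.re - w.re) ^ 2| ≤ 20 * δ ^ 2 := by
        intro w h1 h2
        have h1 := abs_lt.1 (parabolaNbhd_subset hδ hm1 hm h1).2.2
        have h2 := abs_lt.1 (parabolaNbhd_subset hδ hn1 hn h2).2.2
        rw [Complex.sub_im, Complex.sub_re] at h2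
        exact abs_le.2 ⟨by linarith, by linarith⟩
      rintro w ⟨hw1, hw2⟩ w' ⟨hw1', hw2'⟩
      rw [le_div_iff₀ (by positivity)]
      obtain ⟨a1, a2, -⟩ := parabolaNbhd_subset hδ hm1 hm hw1
      obtain ⟨b1, b2, -⟩ := parabolaNbhd_subset hδ hn1 hn hw2
      obtain ⟨a1', a2', -⟩ := parabolaNbhd_subset hδ hm1 hm hw1'
      rw [Complex.sub_re] at b1 b2
      exact abs_sub_mul_le hδ0 a1 a2 b1 b2 (key w hw1 hw2) a1' a2' (key w' hw1' hw2')
  · have hempty : {w : ℂ | w ∈ parabolaNbhd s m ∧ z - w ∈ parabolaNbhd s n} = ∅ :=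
      eq_empty_of_forall_notMem fun w hw =>
        hz (mem_add.2 ⟨w, hw.1, z - w, hw.2, add_sub_cancel _ _⟩)
    simp [indicatorConv, hempty]
end

section
/- There exist absolute constants c, C > 0 such that for every s ∈ ℕ and all 1 ≤ m, n ≤ 2^s, the Lebesgue measure of the Minkowski sum satisfies c (1 + |m − n|) 2^{−3s} ≤ |R_m + R_n| ≤ C (1 + |m − n|) 2^{−3s}. -/
/-! Write `δ = 2^{-s}`, and let `a`, `b` be the left endpoints of the two intervals. For parameters
`a + p` and `b + q` on the arcs, the sum `Φ(a + p) + Φ(b + q)` has abscissa `a + b + (p + q)` and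
ordinate `a² + b² + (a + b)(p + q) + (a - b)(p - q) + p² + q²`. Thus, once the abscissa is fixed, the
ordinate is free only through `(a - b)(p - q)`, of size at most `|m - n| δ²`, up to errors `O(δ²)`
coming from the curvature and from the neighbourhoods. Hence `R_m + R_n` is sandwiched between two
bands around the graph of a function, of width `≈ δ` and height `≈ (1 + |m - n|) δ²`
(`sum_subset_band` and `band_subset_sum`); the area of such a band does not depend on the function
(`volume_band`). -/

open MeasureTheory Real Set Pointwise

/-- The open vertical band of half-height `w` around the graph of `g` over `(l, r)`. -/
def band (l r w : ℝ) (g : ℝ → ℝ) : Set ℂ :=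
  {z | z.re ∈ Ioo l r ∧ z.im ∈ Ioo (g z.re - w) (g z.re + w)}

theorem volume_band {l r w : ℝ} {g : ℝ → ℝ} (hw : 0 ≤ w) (hg : Continuous g) :
    volume (band l r w g) = ENNReal.ofReal (2 * w * (r - l)) := by
  have h1 : band l r w g = Complex.measurableEquivRealProd ⁻¹'
      regionBetween (fun x => g x - w) (fun x => g x + w) (Ioo l r) := by
    ext z
    simp [band, regionBetween, Complex.measurableEquivRealProd_apply]
  rw [h1, Complex.volume_preserving_equiv_real_prod.measure_preimage_equiv,
    Measure.volume_eq_prod,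
    volume_regionBetween_eq_lintegral (by fun_prop) (by fun_prop) measurableSet_Ioo]
  have h2 : ∀ y, ((fun x => g x + w) - fun x => g x - w) y = 2 * w := by
    intro y
    simp only [Pi.sub_apply]
    ring
  simp only [h2, setLIntegral_const, Real.volume_Ioo]
  rw [← ENNReal.ofReal_mul (by positivity)]

/-- Points of `R_n` are within `2δ²` of the arc in each coordinate; the factor `2` absorbs the fact
that the infimum distance to the half-open arc need not be attained. -/
theorem exists_of_mem_parabolaNbhd {s n : ℕ} {δ a : ℝ} (hδ : δ = 2 ^ (-(s : ℤ)))
    (ha : a = ((n : ℝ) - 1) * δ) {z : ℂ} (hz : z ∈ parabolaNbhd s n) :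
    ∃ p, 0 ≤ p ∧ p < δ ∧ |z.re - (a + p)| ≤ 2 * δ ^ 2 ∧ |z.im - (a + p) ^ 2| ≤ 2 * δ ^ 2 := by
  have hpos : 0 < δ := by rw [hδ]; positivity
  have h2 : (2 : ℝ) ^ (-(2 * s : ℤ)) = δ ^ 2 := by
    rw [hδ, ← zpow_natCast, ← zpow_mul]
    congr 1
    push_cast
    ring
  simp only [parabolaNbhd, mem_ofPred_eq, h2, ← hδ] at hz
  have hne : (Phi '' Ico (((n : ℝ) - 1) * δ) ((n : ℝ) * δ)).Nonempty :=
    ⟨_, _, ⟨le_refl _, by nlinarith⟩, rfl⟩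
  obtain ⟨_, ⟨t, ⟨ht1, ht2⟩, rfl⟩, ht⟩ :=
    (Metric.infDist_lt_iff hne).1 (lt_of_le_of_lt hz (by nlinarith [sq_pos_of_pos hpos] :
      δ ^ 2 < 2 * δ ^ 2))
  rw [Complex.dist_eq] at ht
  refine ⟨t - a, by linarith, by linarith, ?_, ?_⟩
  · have := Complex.abs_re_le_norm (z - Phi t)
    simp only [Complex.sub_re, Phi] at this ht
    rw [add_sub_cancel]
    linarith
  · have := Complex.abs_im_le_norm (z - Phi t)
    simp only [Complex.sub_im, Phi] at this ht
    rw [add_sub_cancel]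
    linarith

theorem mem_parabolaNbhd {s n : ℕ} {δ a : ℝ} (hδ : δ = 2 ^ (-(s : ℤ)))
    (ha : a = ((n : ℝ) - 1) * δ) {p v : ℝ} (hp : 0 ≤ p) (hp' : p < δ) (hv : |v| ≤ δ ^ 2) :
    (⟨a + p, (a + p) ^ 2 + v⟩ : ℂ) ∈ parabolaNbhd s n := by
  have h2 : (2 : ℝ) ^ (-(2 * s : ℤ)) = δ ^ 2 := by
    rw [hδ, ← zpow_natCast, ← zpow_mul]
    congr 1
    push_cast
    ring
  simp only [parabolaNbhd, mem_ofPred_eq, h2, ← hδ]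
  have hm : Phi (a + p) ∈ Phi '' Ico (((n : ℝ) - 1) * δ) ((n : ℝ) * δ) :=
    ⟨_, ⟨by linarith, by linarith⟩, rfl⟩
  refine (Metric.infDist_le_dist_of_mem hm).trans ?_
  rw [Complex.dist_of_re_eq (by simp [Phi])]
  simpa [Phi, Real.dist_eq] using hv

theorem sum_subset_band {s m n : ℕ} {δ a b k : ℝ} (hδ : δ = 2 ^ (-(s : ℤ))) (hδ1 : δ ≤ 1)
    (ha : a = ((m : ℝ) - 1) * δ) (hb : b = ((n : ℝ) - 1) * δ)
    (hab0 : 0 ≤ a + b) (hab : a + b ≤ 2) (hk : |a - b| = k * δ) :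
    parabolaNbhd s m + parabolaNbhd s n ⊆
      band (a + b - 5 * δ) (a + b + 7 * δ) ((k + 15) * δ ^ 2)
        (fun x => a ^ 2 + b ^ 2 + (a + b) * (x - (a + b))) := by
  have hpos : 0 < δ := by rw [hδ]; positivity
  rintro _ ⟨z, hz, w, hw, rfl⟩
  obtain ⟨p, hp, hp', hzr, hzi⟩ := exists_of_mem_parabolaNbhd hδ ha hz
  obtain ⟨q, hq, hq', hwr, hwi⟩ := exists_of_mem_parabolaNbhd hδ hb hw
  have hsq : δ ^ 2 ≤ δ := by nlinarith
  have hsq0 : 0 < δ ^ 2 := by positivity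
  have hpp : p ^ 2 ≤ δ ^ 2 := by gcongr
  have hqq : q ^ 2 ≤ δ ^ 2 := by gcongr
  have hpq : |(a - b) * (p - q)| ≤ k * δ * δ := by
    rw [abs_mul, hk]
    have : |p - q| ≤ δ := abs_le.2 ⟨by linarith, by linarith⟩
    exact mul_le_mul_of_nonneg_left this (hk ▸ abs_nonneg _)
  have hU : |(a + b) * ((z.re - (a + p)) + (w.re - (b + q)))| ≤ 2 * (4 * δ ^ 2) := by
    rw [abs_mul, abs_of_nonneg hab0]
    have := abs_add_le (z.re - (a + p)) (w.re - (b + q))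
    exact mul_le_mul hab (by linarith) (abs_nonneg _) (by norm_num)
  -- the defect of the sum from the line of slope `a + b`
  have key : (z.im + w.im) - (a ^ 2 + b ^ 2 + (a + b) * (z.re + w.re - (a + b))) =
      (z.im - (a + p) ^ 2) + (w.im - (b + q) ^ 2) + p ^ 2 + q ^ 2 + (a - b) * (p - q)
        - (a + b) * ((z.re - (a + p)) + (w.re - (b + q))) := by ring
  rw [abs_le] at hzr hzi hwr hwi hpq hU
  have := sq_nonneg p
  have := sq_nonneg q
  simp only [band, mem_ofPred_eq, mem_Ioo, Complex.add_re, Complex.add_im]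
  refine ⟨⟨by linarith, by linarith⟩, ?_, ?_⟩ <;> nlinarith

theorem band_subset_sum {s m n : ℕ} {δ a b k : ℝ} (hδ : δ = 2 ^ (-(s : ℤ)))
    (ha : a = ((m : ℝ) - 1) * δ) (hb : b = ((n : ℝ) - 1) * δ)
    (hk : |a - b| = k * δ) (hk1 : k = 0 ∨ 1 ≤ k) :
    band (a + b + δ / 2) (a + b + 3 * δ / 2) ((k + 1) * δ ^ 2 / 4)
        (fun x => a ^ 2 + b ^ 2 + (a + b) * (x - (a + b)) + (x - (a + b)) ^ 2 / 2) ⊆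
      parabolaNbhd s m + parabolaNbhd s n := by
  have hpos : 0 < δ := by rw [hδ]; positivity
  have hsq0 : 0 < δ ^ 2 := by positivity
  rintro z ⟨⟨h1, h2⟩, h3, h4⟩
  obtain ⟨σ, hσ⟩ : ∃ σ, σ = z.re - (a + b) := ⟨_, rfl⟩
  obtain ⟨τ, hτ⟩ : ∃ τ, τ = z.im - (a ^ 2 + b ^ 2 + (a + b) * σ + σ ^ 2 / 2) := ⟨_, rfl⟩
  simp only [← hσ] at h3 h4
  have hτ' : |τ| ≤ (k + 1) * δ ^ 2 / 4 := abs_le.2 ⟨by linarith, by linarith⟩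
  -- `d = p - q` moves the ordinate by `(a - b) d`, up to the curvature term `d² / 2`
  obtain ⟨d, hd, hv⟩ : ∃ d, |d| ≤ δ / 2 ∧ |τ - (a - b) * d - d ^ 2 / 2| ≤ δ ^ 2 := by
    rcases hk1 with h0 | h1
    · refine ⟨0, by rw [abs_zero]; positivity, ?_⟩
      subst h0
      simp only [mul_zero, sub_zero, ne_eq, OfNat.ofNat_ne_zero, not_false_eq_true, zero_pow,
        zero_div]
      linarith
    · have hne : a - b ≠ 0 := by
        rw [← abs_pos, hk]
        positivity
      have hd : |τ / (a - b)| ≤ δ / 2 := by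
        rw [abs_div, hk, div_le_iff₀ (by positivity)]
        nlinarith
      refine ⟨τ / (a - b), hd, ?_⟩
      rw [mul_div_cancel₀ _ hne, sub_self, zero_sub, abs_neg, abs_of_nonneg (by positivity)]
      have := sq_le_sq' (abs_le.1 hd).1 (abs_le.1 hd).2
      nlinarith
  rw [abs_le] at hd
  refine ⟨_, mem_parabolaNbhd hδ ha (p := (σ + d) / 2) (v := 0) (by linarith) (by linarith)
    (by simpa using hsq0.le), _, mem_parabolaNbhd hδ hb (p := (σ - d) / 2) (by linarith)
    (by linarith) hv, ?_⟩
  apply Complex.ext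
  · simp only [Complex.add_re]
    linarith
  · simp only [Complex.add_im]
    rw [hτ]
    ring

/-- Two-sided measure estimate for the Minkowski sums `R_m + R_n`:
`|R_m + R_n| ≈ (1 + |m − n|) 2^{−3s}`. -/
theorem measure_minkowski_sum_parabolaNbhd :
    ∃ c C : ℝ, 0 < c ∧ 0 < C ∧
      ∀ s : ℕ, ∀ m n : ℕ, 1 ≤ m → m ≤ 2 ^ s → 1 ≤ n → n ≤ 2 ^ s →
        c * (1 + |(m : ℝ) - (n : ℝ)|) * 2 ^ (-(3 * s : ℤ)) ≤
            (volume (parabolaNbhd s m + parabolaNbhd s n)).toReal ∧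
          (volume (parabolaNbhd s m + parabolaNbhd s n)).toReal ≤
            C * (1 + |(m : ℝ) - (n : ℝ)|) * 2 ^ (-(3 * s : ℤ)) := by
  refine ⟨1 / 2, 360, by norm_num, by norm_num, ?_⟩
  intro s m n hm hm' hn hn'
  obtain ⟨δ, hδ⟩ : ∃ δ : ℝ, δ = 2 ^ (-(s : ℤ)) := ⟨_, rfl⟩
  have hpos : 0 < δ := by rw [hδ]; positivity
  have h3 : (2 : ℝ) ^ (-(3 * s : ℤ)) = δ ^ 3 := by
    rw [hδ, ← zpow_natCast, ← zpow_mul]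
    congr 1
    push_cast
    ring
  have hinv : (2 : ℝ) ^ s * δ = 1 := by
    rw [hδ, zpow_neg, zpow_natCast]
    exact mul_inv_cancel₀ (by positivity)
  have hpow : (1 : ℝ) ≤ 2 ^ s := one_le_pow₀ (by norm_num)
  have hδ1 : δ ≤ 1 := by nlinarith
  have hm1 : (1 : ℝ) ≤ m := by exact_mod_cast hm
  have hn1 : (1 : ℝ) ≤ n := by exact_mod_cast hn
  have hm2 : (m : ℝ) ≤ 2 ^ s := by exact_mod_cast hm'
  have hn2 : (n : ℝ) ≤ 2 ^ s := by exact_mod_cast hn'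
  obtain ⟨a, ha⟩ : ∃ a : ℝ, a = ((m : ℝ) - 1) * δ := ⟨_, rfl⟩
  obtain ⟨b, hb⟩ : ∃ b : ℝ, b = ((n : ℝ) - 1) * δ := ⟨_, rfl⟩
  obtain ⟨k, hk⟩ : ∃ k : ℝ, k = |(m : ℝ) - (n : ℝ)| := ⟨_, rfl⟩
  have hk0 : 0 ≤ k := hk ▸ abs_nonneg _
  have hkab : |a - b| = k * δ := by
    rw [hk, ha, hb, ← sub_mul, abs_mul, abs_of_pos hpos]
    congr 2
    ring
  have hk1 : k = 0 ∨ 1 ≤ k := by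
    have h : k = ((|(m : ℤ) - n| : ℤ) : ℝ) := by rw [hk]; push_cast; rfl
    rcases (abs_nonneg ((m : ℤ) - n)).eq_or_lt with h0 | h0
    · left; rw [h, ← h0, Int.cast_zero]
    · right; rw [h]; exact_mod_cast h0
  have ha0 : 0 ≤ a := by rw [ha]; exact mul_nonneg (by linarith) hpos.le
  have hb0 : 0 ≤ b := by rw [hb]; exact mul_nonneg (by linarith) hpos.le
  have ha1 : a ≤ 1 := by nlinarith
  have hb1 : b ≤ 1 := by nlinarith
  rw [h3, ← hk]
  have hup := measure_mono (μ := volume)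
    (sum_subset_band hδ hδ1 ha hb (by linarith) (by linarith) hkab)
  have hlo := measure_mono (μ := volume) (band_subset_sum hδ ha hb hkab hk1)
  rw [volume_band (by positivity) (by fun_prop)] at hup hlo
  constructor
  · have := (ENNReal.ofReal_le_iff_le_toReal (hup.trans_lt ENNReal.ofReal_lt_top).ne).1 hlo
    calc _ = _ := by ring
      _ ≤ _ := this
  · have e1 : 0 ≤ k * δ ^ 3 := by positivity
    have e2 : 0 < δ ^ 3 := by positivity
    calc _ ≤ _ := ENNReal.toReal_mono ENNReal.ofReal_ne_top hup
      _ = 2 * ((k + 15) * δ ^ 2) * (a + b + 7 * δ - (a + b - 5 * δ)) :=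
        ENNReal.toReal_ofReal (by linarith)
      _ = 24 * (k * δ ^ 3) + 360 * δ ^ 3 := by ring
      _ ≤ _ := by linarith
end

section
/- For every q > 4 there exists a constant C_q such that for every t ∈ ℕ and every function F on [0,1] that is constant on each dyadic interval [(n−1)2^{−t}, n·2^{−t}), 1 ≤ n ≤ 2^t, one has (∫_{ℝ²} |EF(ξ)|^q dξ)^{1/q} ≤ C_q ‖F‖_{L^{2q/(q−2)}([0,1])} ≤ C_q ‖F‖_{L^q([0,1])}, with C_q independent of t. -/
/-!
The proof is the classical bilinear one. Squaring,
`(Ef)² (ξ) = ∫∫ e^{-i(ξ₁(x+y) + ξ₂(x²+y²))} f(x) f(y) dx dy`, which by symmetry is twice the integral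
over the triangle `0 < y < x < 1`. There `(x, y) ↦ (x + y, x² + y²)` is injective with Jacobian
`2(x - y)`, so `(Ef)²` is twice the Fourier transform of a function on the plane whose value at
`(x + y, x² + y²)` is `g(x, y) = f(x) f(y) / (2(x - y))` (`sq_parabolaExtension`).

With `r = q/2 > 2` and `s = r/(r-1)` its conjugate exponent, the Hausdorff-Young inequality bounds
`‖Ef‖_q^2 = ‖(Ef)²‖_r` by the `L^s` norm of `g` with respect to `2(x - y) dx dy`. That norm satisfies
`∫ |g|^s 2(x - y) dx dy ≤ ∫∫ |f(x) f(y)|^s (x - y)^{1-s} dx dy ≤ C ∫ |f|^{2s}`, by the inequality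
between arithmetic and geometric means, since `s - 1 = 1/(r-1) < 1` makes the kernel integrable
(`lintegral_pairDensity`). Finally `2s = 2q/(q-2)`.

The Hausdorff-Young inequality, with a non-sharp constant, is obtained by real interpolation
(`hausdorff_young`) between the trivial `L¹ → L^∞` bound and the `L²` bound `osc_l2`. Everything is
phrased for a finite measure `ν` and a map `Φ` into the plane with `Φ_* ν ≤ volume`, so that no
inverse of the change of variables is needed. The `L²` bound comes from a Gaussian regularization and
Schur's test.

A dyadic step function enters only through its being bounded and measurable on `[0, 1)`.
-/

open MeasureTheory Real Set

/-- The Fourier extension operator on the parabola: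
`Ef(ξ) = ∫_0^1 e^{−i(ξ₁x + ξ₂x²)} f(x) dx`. -/
noncomputable def parabolaExtension (f : ℝ → ℂ) (ξ : ℂ) : ℂ :=
  ∫ x in (0:ℝ)..1, Complex.exp (-Complex.I * ((ξ.re * x + ξ.im * x ^ 2 : ℝ) : ℂ)) * f x

/-! ### Oscillatory integrals and the `L²` bound -/

/-- The Fourier transform of the pushforward of the complex measure `g ν` under `Φ : X → ℂ`, where `ℂ`
is identified with the Euclidean plane. -/
noncomputable def osc {X : Type*} [MeasurableSpace X] (ν : Measure X) (Φ : X → ℂ) (g : X → ℂ)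
    (ξ : ℂ) : ℂ :=
  ∫ z, Complex.exp (-Complex.I * (inner ℝ (Φ z) ξ : ℝ)) * g z ∂ν

lemma measurable_osc {X : Type*} [MeasurableSpace X] (ν : Measure X) [IsFiniteMeasure ν]
    {Φ : X → ℂ} (hΦ : Measurable Φ) {g : X → ℂ} (hg : Measurable g) : Measurable (osc ν Φ g) := by
  have : StronglyMeasurable (fun q : ℂ × X =>
      Complex.exp (-Complex.I * (inner ℝ (Φ q.2) q.1 : ℝ)) * g q.2) := by
    apply Measurable.stronglyMeasurable
    fun_prop
  exact this.integral_prod_right.measurable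

lemma lintegral_gaussian_kernel {b : ℝ} (hb : 0 < b) (v : ℂ) :
    ∫⁻ w : ℂ, ENNReal.ofReal (π / b * rexp (-‖v - w‖ ^ 2 / (4 * b))) =
      ENNReal.ofReal (4 * π ^ 2) := by
  rw [lintegral_sub_left_eq_self (fun w : ℂ => ENNReal.ofReal (π / b * rexp (-‖w‖ ^ 2 / (4 * b)))) v]
  have hb' : 0 < 1 / (4 * b) := by positivity
  have h3 := GaussianFourier.integral_rexp_neg_mul_sq_norm (V := ℂ) hb'
  have h4 : Integrable (fun w : ℂ => rexp (-(1 / (4 * b)) * ‖w‖ ^ 2)) := by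
    by_contra h
    rw [integral_undef h] at h3
    have : 0 < (π / (1 / (4 * b))) ^ ((Module.finrank ℝ ℂ : ℝ) / 2) := by positivity
    linarith
  have h5 : ∀ w : ℂ, π / b * rexp (-‖w‖ ^ 2 / (4 * b))
      = π / b * rexp (-(1 / (4 * b)) * ‖w‖ ^ 2) := by
    intro w; congr 2; field_simp
  simp_rw [h5]
  rw [← ofReal_integral_eq_lintegral_ofReal (h4.const_mul _)
    (Filter.Eventually.of_forall fun w => by positivity), integral_const_mul, h3]
  congr 1
  simp
  field_simp

/-- The `L²` bound with a Gaussian weight in the frequency variable: expanding the square produces the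
kernel `(π/b) exp(-|Φ z - Φ z'|²/(4b))`, whose integral in either variable against `ν` is at most
`4π²` because the pushforward of `ν` is dominated by Lebesgue measure. -/
lemma gaussian_l2 {X : Type*} [MeasurableSpace X] (ν : Measure X) [IsFiniteMeasure ν]
    {Φ : X → ℂ} (hΦ : Measurable Φ) (hν : ν.map Φ ≤ volume) {g : X → ℂ} (hg : Measurable g)
    {B : ℝ} (hB : ∀ z, ‖g z‖ ≤ B) {b : ℝ} (hb : 0 < b) :
    ∫⁻ ξ : ℂ, ENNReal.ofReal (rexp (-b * ‖ξ‖ ^ 2)) * ‖osc ν Φ g ξ‖ₑ ^ 2 ≤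
      ENNReal.ofReal (4 * π ^ 2) * ∫⁻ z, ‖g z‖ₑ ^ 2 ∂ν := by
  set H : ℂ → X × X → ℂ := fun ξ p =>
    Complex.exp (-(b : ℂ) * ‖ξ‖ ^ 2 + -Complex.I * (inner ℝ (Φ p.1 - Φ p.2) ξ : ℝ)) *
      (g p.1 * (starRingEnd ℂ) (g p.2)) with hH
  set K : X × X → ℝ := fun p => π / b * rexp (-‖Φ p.1 - Φ p.2‖ ^ 2 / (4 * b)) with hK
  have hKm : Measurable K := by fun_prop
  have hHm : Measurable (Function.uncurry H) := by
    have : Measurable (starRingEnd ℂ) := Complex.continuous_conj.measurable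
    simp only [hH, Function.uncurry_def]
    fun_prop
  have hgauss : Integrable (fun w : ℂ => rexp (-b * ‖w‖ ^ 2)) := by
    have h2 := (GaussianFourier.integrable_cexp_neg_mul_sq_norm_add (V := ℂ) (b := b)
      (by simpa using hb) 0 0).norm
    refine h2.congr (Filter.Eventually.of_forall fun w => ?_)
    simp [Complex.norm_exp, ← Complex.ofReal_pow]
  have hHint : Integrable (Function.uncurry H) (volume.prod (ν.prod ν)) := by
    have h1 : Integrable (fun q : ℂ × (X × X) => rexp (-b * ‖q.1‖ ^ 2) * (B * B))
        (volume.prod (ν.prod ν)) := by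
      exact hgauss.mul_prod (integrable_const (B * B))
    refine h1.mono' hHm.aestronglyMeasurable (Filter.Eventually.of_forall ?_)
    rintro ⟨ξ, z, z'⟩
    have hB0 : 0 ≤ B := (norm_nonneg _).trans (hB z)
    have e1 : ‖Complex.exp (-(b : ℂ) * ‖ξ‖ ^ 2 + -Complex.I * (inner ℝ (Φ z - Φ z') ξ : ℝ))‖
        = rexp (-b * ‖ξ‖ ^ 2) := by
      rw [Complex.norm_exp]; congr 1; simp [← Complex.ofReal_pow]
    simp only [hH, Function.uncurry]
    rw [norm_mul, e1, norm_mul, RCLike.norm_conj]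
    gcongr
    · exact hB z
    · exact hB z'
  have hsq : ∀ ξ, ∫ p, H ξ p ∂(ν.prod ν) =
      ((rexp (-b * ‖ξ‖ ^ 2) * ‖osc ν Φ g ξ‖ ^ 2 : ℝ) : ℂ) := by
    intro ξ
    have e : ∀ p : X × X, H ξ p = Complex.exp (-(b : ℂ) * ‖ξ‖ ^ 2) *
       ((Complex.exp (-Complex.I * (inner ℝ (Φ p.1) ξ : ℝ)) * g p.1) *
        (starRingEnd ℂ) (Complex.exp (-Complex.I * (inner ℝ (Φ p.2) ξ : ℝ)) * g p.2)) := by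
      intro p
      simp only [hH]
      rw [map_mul, ← Complex.exp_conj, Complex.exp_add, inner_sub_left,
        Complex.ofReal_sub, mul_sub, sub_eq_add_neg, Complex.exp_add]
      have : (starRingEnd ℂ) (-Complex.I * ((inner ℝ (Φ p.2) ξ : ℝ) : ℂ))
        = -(-Complex.I * ((inner ℝ (Φ p.2) ξ : ℝ) : ℂ)) := by simp
      rw [this]
      ring
    simp_rw [e]
    rw [integral_const_mul, integral_prod_mul
      (fun z => Complex.exp (-Complex.I * (inner ℝ (Φ z) ξ : ℝ)) * g z)
      (fun z => (starRingEnd ℂ) (Complex.exp (-Complex.I * (inner ℝ (Φ z) ξ : ℝ)) * g z)),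
      integral_conj, RCLike.mul_conj]
    simp [osc]
  have hswap : ∫ ξ, ∫ p, H ξ p ∂(ν.prod ν) =
      ∫ p, (K p : ℂ) * (g p.1 * (starRingEnd ℂ) (g p.2)) ∂(ν.prod ν) := by
    rw [integral_integral_swap hHint]
    congr 1; ext p
    simp only [hH]
    rw [integral_mul_const, GaussianFourier.integral_cexp_neg_mul_sq_norm_add (V := ℂ) (b := b)
      (by simpa using hb)]
    simp [hK]
  have hintg1 : Integrable (fun ξ => rexp (-b * ‖ξ‖ ^ 2) * ‖osc ν Φ g ξ‖ ^ 2) := by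
    have := hHint.integral_prod_left
    simp only [Function.uncurry] at this
    simp_rw [hsq] at this
    exact this.re
  have e0 : ∫⁻ ξ : ℂ, ENNReal.ofReal (rexp (-b * ‖ξ‖ ^ 2)) * ‖osc ν Φ g ξ‖ₑ ^ 2 =
      ‖∫ ξ, ∫ p, H ξ p ∂(ν.prod ν)‖ₑ := by
    simp_rw [hsq]
    rw [integral_complex_ofReal]
    rw [← ofReal_norm]
    rw [Complex.norm_real, Real.norm_of_nonneg (integral_nonneg fun ξ => by positivity),
      ofReal_integral_eq_lintegral_ofReal hintg1
        (Filter.Eventually.of_forall fun w => by positivity)]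
    congr 1; ext ξ
    rw [ENNReal.ofReal_mul (by positivity), ENNReal.ofReal_pow (norm_nonneg _),
      ofReal_norm]
  -- The estimate for Schur's test, stated for an arbitrary `L` so as to apply to both variables.
  have key : ∀ (L : X → X → ℝ), (∀ z z', L z z' = π / b * rexp (-‖Φ z - Φ z'‖ ^ 2 / (4 * b))) →
      ∫⁻ z, ∫⁻ z', ENNReal.ofReal (L z z') * ‖g z‖ₑ ^ 2 ∂ν ∂ν ≤
      ENNReal.ofReal (4 * π ^ 2) * ∫⁻ z, ‖g z‖ₑ ^ 2 ∂ν := by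
    intro L hL
    simp_rw [hL]
    rw [← lintegral_const_mul _ (by fun_prop)]
    refine lintegral_mono fun z => ?_
    rw [lintegral_mul_const _ (by fun_prop)]
    gcongr
    rw [← lintegral_gaussian_kernel hb (Φ z)]
    rw [← lintegral_map (μ := ν)
      (f := fun w => ENNReal.ofReal (π / b * rexp (-‖Φ z - w‖ ^ 2 / (4 * b)))) (by fun_prop) hΦ]
    exact lintegral_mono' hν le_rfl
  rw [e0, hswap]
  refine (enorm_integral_le_lintegral_enorm _).trans ?_
  have e2 : ∀ p : X × X, ‖(K p : ℂ) * (g p.1 * (starRingEnd ℂ) (g p.2))‖ₑ ≤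
      2⁻¹ * (ENNReal.ofReal (K p) * ‖g p.1‖ₑ ^ 2 + ENNReal.ofReal (K p) * ‖g p.2‖ₑ ^ 2) := by
    intro p
    have hK0 : 0 ≤ K p := by simp only [hK]; positivity
    simp only [← ofReal_norm]
    rw [show (2⁻¹ : ENNReal) = ENNReal.ofReal (2⁻¹) by
      rw [ENNReal.ofReal_inv_of_pos (by norm_num)]; simp]
    rw [← ENNReal.ofReal_pow (norm_nonneg _), ← ENNReal.ofReal_pow (norm_nonneg _),
      ← ENNReal.ofReal_mul hK0, ← ENNReal.ofReal_mul hK0, ← ENNReal.ofReal_add (by positivity)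
      (by positivity), ← ENNReal.ofReal_mul (by norm_num)]
    apply ENNReal.ofReal_le_ofReal
    rw [norm_mul, norm_mul, RCLike.norm_conj, Complex.norm_real, Real.norm_of_nonneg hK0]
    nlinarith [mul_nonneg hK0 (sq_nonneg (‖g p.1‖ - ‖g p.2‖))]
  refine (lintegral_mono e2).trans ?_
  rw [lintegral_const_mul _ (by fun_prop), lintegral_add_left (by fun_prop)]
  rw [lintegral_prod _ (by fun_prop), lintegral_prod_symm _ (by fun_prop)]
  have k1 := key (fun z z' => K (z, z')) (fun z z' => rfl)
  have k2 := key (fun z z' => K (z', z)) (fun z z' => by simp only [hK]; rw [norm_sub_rev])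
  refine (mul_le_mul_right (add_le_add k1 k2) _).trans ?_
  rw [← two_mul, ← mul_assoc, ENNReal.inv_mul_cancel (by simp) (by simp), one_mul]

/-- The `L²` bound of Plancherel type: let `b = 1/(n+1) → 0` in `gaussian_l2` and use Fatou's lemma. -/
lemma osc_l2 {X : Type*} [MeasurableSpace X] (ν : Measure X) [IsFiniteMeasure ν]
    {Φ : X → ℂ} (hΦ : Measurable Φ) (hν : ν.map Φ ≤ volume) {g : X → ℂ} (hg : Measurable g)
    {B : ℝ} (hB : ∀ z, ‖g z‖ ≤ B) :
    ∫⁻ ξ : ℂ, ‖osc ν Φ g ξ‖ₑ ^ 2 ≤ ENNReal.ofReal (4 * π ^ 2) * ∫⁻ z, ‖g z‖ₑ ^ 2 ∂ν := by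
  have hm := measurable_osc ν hΦ hg
  have hlim : ∀ ξ, Filter.Tendsto (fun n : ℕ => ENNReal.ofReal (rexp (-(1 / ((n : ℝ) + 1)) * ‖ξ‖ ^ 2))
      * ‖osc ν Φ g ξ‖ₑ ^ 2) Filter.atTop (nhds (‖osc ν Φ g ξ‖ₑ ^ 2)) := by
    intro ξ
    have h1 : Filter.Tendsto (fun n : ℕ => rexp (-(1 / ((n : ℝ) + 1)) * ‖ξ‖ ^ 2)) Filter.atTop
        (nhds 1) := by
      have := ((tendsto_one_div_add_atTop_nhds_zero_nat (𝕜 := ℝ)).neg.mul_const (‖ξ‖ ^ 2)).rexp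
      simpa using this
    have h2 := (ENNReal.tendsto_ofReal h1)
    simpa using ENNReal.Tendsto.mul_const h2 (Or.inl (by simp))
  calc ∫⁻ ξ : ℂ, ‖osc ν Φ g ξ‖ₑ ^ 2
      = ∫⁻ ξ : ℂ, Filter.liminf (fun n : ℕ =>
          ENNReal.ofReal (rexp (-(1 / ((n : ℝ) + 1)) * ‖ξ‖ ^ 2)) * ‖osc ν Φ g ξ‖ₑ ^ 2)
          Filter.atTop := lintegral_congr fun ξ => ((hlim ξ).liminf_eq).symm
    _ ≤ Filter.liminf (fun n : ℕ => ∫⁻ ξ : ℂ,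
          ENNReal.ofReal (rexp (-(1 / ((n : ℝ) + 1)) * ‖ξ‖ ^ 2)) * ‖osc ν Φ g ξ‖ₑ ^ 2)
          Filter.atTop := lintegral_liminf_le fun n => by fun_prop
    _ ≤ _ := by
      refine Filter.liminf_le_of_le (by isBoundedDefault) fun c hc => ?_
      obtain ⟨n, hn⟩ := hc.exists
      exact hn.trans (gaussian_l2 ν hΦ hν hg hB (by positivity))

/-! ### Real interpolation -/

/-- Distribution estimate for interpolation. The function is cut at the height
`h = (2M/t)^(r-1)`, chosen so that the part above `h` has `L¹` norm at most `t/2`; Chebyshev's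
inequality and the `L²` bound then control the part below `h`. -/
lemma level_set_bound {X : Type*} [MeasurableSpace X] (ν : Measure X) [IsFiniteMeasure ν]
    {Φ : X → ℂ} (hΦ : Measurable Φ) (hν : ν.map Φ ≤ volume) {g : X → ℂ} (hg : Measurable g)
    {r : ℝ} (hr : 2 < r) {M : ℝ} (hM : 0 < M)
    (hgM : ∫⁻ z, ENNReal.ofReal (‖g z‖ ^ (r / (r - 1))) ∂ν ≤ ENNReal.ofReal M)
    {t : ℝ} (ht : 0 < t) :
    volume {ξ | t < ‖osc ν Φ g ξ‖} ≤ ENNReal.ofReal (16 * π ^ 2 * t ^ (-2 : ℝ)) *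
      ∫⁻ z, (if ‖g z‖ ≤ (2 * M / t) ^ (r - 1) then ‖g z‖ₑ ^ 2 else 0) ∂ν := by
  set h : ℝ := (2 * M / t) ^ (r - 1) with hh
  have hh0 : 0 < h := by positivity
  set A : Set X := {z | ‖g z‖ ≤ h} with hA
  have hAm : MeasurableSet A := measurableSet_le hg.norm measurable_const
  set g1 : X → ℂ := A.indicator g with hg1
  set g2 : X → ℂ := Aᶜ.indicator g with hg2
  have hg1m : Measurable g1 := hg.indicator hAm
  have hg2m : Measurable g2 := hg.indicator hAm.compl
  have hg1B : ∀ z, ‖g1 z‖ ≤ h := by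
    intro z
    by_cases hz : z ∈ A
    · rw [hg1, Set.indicator_of_mem hz]; exact hz
    · simp [hg1, hz, hh0.le]
  -- Where `‖g z‖ > h`, the factor `‖g z‖ ^ (1/(r-1))` exceeds `h ^ (1/(r-1)) = 2M/t`.
  have hpt : ∀ z, ‖g2 z‖ ≤ t / (2 * M) * ‖g z‖ ^ (r / (r - 1)) := by
    intro z
    by_cases hz : z ∈ A
    · simp only [hg2, Set.indicator, Set.mem_compl_iff, hz, not_true_eq_false, if_false, norm_zero]
      positivity
    · have hz' : h < ‖g z‖ := by simpa [hA] using hz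
      simp only [hg2, Set.indicator, Set.mem_compl_iff, hz, not_false_eq_true, if_true]
      have ha : 0 < ‖g z‖ := hh0.trans hz'
      have e : r / (r - 1) = 1 + (r - 1)⁻¹ := by field_simp [show r - 1 ≠ 0 by linarith]; ring
      rw [e, Real.rpow_add ha, Real.rpow_one]
      have h3 : 2 * M / t ≤ ‖g z‖ ^ (r - 1)⁻¹ := by
        calc 2 * M / t = h ^ (r - 1)⁻¹ := by
              rw [hh, Real.rpow_rpow_inv (by positivity) (by linarith)]
          _ ≤ _ := Real.rpow_le_rpow hh0.le hz'.le (inv_nonneg.2 (by linarith))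
      have h4 : 1 ≤ t / (2 * M) * ‖g z‖ ^ (r - 1)⁻¹ := by
        rw [div_mul_eq_mul_div, le_div_iff₀ (by positivity)]
        rw [div_le_iff₀ ht] at h3
        linarith
      nlinarith
  have hg2l : ∫⁻ z, ‖g2 z‖ₑ ∂ν ≤ ENNReal.ofReal (t / 2) := by
    calc ∫⁻ z, ‖g2 z‖ₑ ∂ν ≤ ∫⁻ z, ENNReal.ofReal (t / (2 * M)) *
          ENNReal.ofReal (‖g z‖ ^ (r / (r - 1))) ∂ν := by
          refine lintegral_mono fun z => ?_
          rw [← ENNReal.ofReal_mul (by positivity), ← ofReal_norm]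
          exact ENNReal.ofReal_le_ofReal (hpt z)
      _ ≤ ENNReal.ofReal (t / (2 * M)) * ENNReal.ofReal M := by
          rw [lintegral_const_mul _ (by fun_prop)]
          gcongr
      _ = _ := by
          rw [← ENNReal.ofReal_mul (by positivity)]
          congr 1; field_simp
  have hn : ∀ ξ z, ‖Complex.exp (-Complex.I * (inner ℝ (Φ z) ξ : ℝ))‖ = 1 := by
    intro ξ z; rw [Complex.norm_exp]; simp
  have i1 : ∀ ξ, Integrable (fun z => Complex.exp (-Complex.I * (inner ℝ (Φ z) ξ : ℝ)) * g1 z) ν := by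
    intro ξ
    refine (integrable_const h).mono' (by fun_prop) (Filter.Eventually.of_forall fun z => ?_)
    rw [norm_mul, hn, one_mul]; exact hg1B z
  have i2 : ∀ ξ, Integrable (fun z => Complex.exp (-Complex.I * (inner ℝ (Φ z) ξ : ℝ)) * g2 z) ν := by
    intro ξ
    refine ⟨by fun_prop, ?_⟩
    refine lt_of_le_of_lt (lintegral_mono fun z => ?_) (hg2l.trans_lt ENNReal.ofReal_lt_top)
    rw [← ofReal_norm, norm_mul, hn, one_mul, ofReal_norm]
  have hsum : ∀ ξ, osc ν Φ g ξ = osc ν Φ g1 ξ + osc ν Φ g2 ξ := by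
    intro ξ
    simp only [osc]
    rw [← integral_add (i1 ξ) (i2 ξ)]
    congr 1; ext z
    rw [← mul_add, hg1, hg2]
    congr 1
    exact (congrFun (Set.indicator_self_add_compl A g) z).symm
  have hb2 : ∀ ξ, ‖osc ν Φ g2 ξ‖ ≤ t / 2 := by
    intro ξ
    have : ‖osc ν Φ g2 ξ‖ₑ ≤ ENNReal.ofReal (t / 2) := by
      refine (enorm_integral_le_lintegral_enorm _).trans (le_trans (lintegral_mono fun z => ?_) hg2l)
      rw [← ofReal_norm, norm_mul, hn, one_mul, ofReal_norm]
    rw [← ofReal_norm] at this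
    exact (ENNReal.ofReal_le_ofReal_iff (by positivity)).1 this
  have hsub : {ξ | t < ‖osc ν Φ g ξ‖} ⊆
      {ξ | ENNReal.ofReal ((t / 2) ^ 2) ≤ ‖osc ν Φ g1 ξ‖ₑ ^ 2} := by
    intro ξ hξ
    have h1 : t < ‖osc ν Φ g ξ‖ := hξ
    rw [hsum] at h1
    have h2 := norm_add_le (osc ν Φ g1 ξ) (osc ν Φ g2 ξ)
    have h3 := hb2 ξ
    rw [Set.mem_ofPred_eq, ← ofReal_norm, ← ENNReal.ofReal_pow (norm_nonneg _)]
    apply ENNReal.ofReal_le_ofReal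
    gcongr
    linarith
  have hch := mul_meas_ge_le_lintegral (μ := (volume : Measure ℂ))
    ((measurable_osc ν hΦ hg1m).enorm.pow_const 2) (ENNReal.ofReal ((t / 2) ^ 2))
  have hl2 := osc_l2 ν hΦ hν hg1m hg1B
  have e1 : ∫⁻ z, ‖g1 z‖ₑ ^ 2 ∂ν = ∫⁻ z, (if ‖g z‖ ≤ h then ‖g z‖ₑ ^ 2 else 0) ∂ν := by
    refine lintegral_congr fun z => ?_
    by_cases hz : ‖g z‖ ≤ h
    · simp [hg1, hA, hz]
    · simp [hg1, hA, hz]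
  rw [e1] at hl2
  have e2 : ENNReal.ofReal (16 * π ^ 2 * t ^ (-2 : ℝ)) =
      ENNReal.ofReal (4 * t ^ (-2 : ℝ)) * ENNReal.ofReal (4 * π ^ 2) := by
    rw [← ENNReal.ofReal_mul (by positivity)]; congr 1; ring
  have e3 : ENNReal.ofReal (4 * t ^ (-2 : ℝ)) * ENNReal.ofReal ((t / 2) ^ 2) = 1 := by
    rw [← ENNReal.ofReal_mul (by positivity), ← ENNReal.ofReal_one]; congr 1
    rw [Real.rpow_neg ht.le]; norm_cast; field_simp; norm_num
  calc volume {ξ | t < ‖osc ν Φ g ξ‖} ≤ _ := measure_mono hsub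
    _ = ENNReal.ofReal (4 * t ^ (-2 : ℝ)) * (ENNReal.ofReal ((t / 2) ^ 2) *
        volume {ξ | ENNReal.ofReal ((t / 2) ^ 2) ≤ ‖osc ν Φ g1 ξ‖ₑ ^ 2}) := by
        rw [← mul_assoc, e3, one_mul]
    _ ≤ _ := by
        rw [e2, mul_assoc]
        exact mul_le_mul_right (hch.trans hl2) _

/-- The integral over the levels `t` at which a value of size `a` lies below the cut: the condition
amounts to `t ≤ 2M a^(-1/(r-1))`. -/
lemma inner_integral_bound {r : ℝ} (hr : 2 < r) {M a : ℝ} (hM : 0 < M) (ha : 0 ≤ a) :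
    ∫⁻ t in Ioi (0 : ℝ), ENNReal.ofReal (t ^ (r - 3)) *
        (if a ≤ (2 * M / t) ^ (r - 1) then ENNReal.ofReal (a ^ 2) else 0) ≤
      ENNReal.ofReal ((2 * M) ^ (r - 2) / (r - 2)) * ENNReal.ofReal (a ^ (r / (r - 1))) := by
  rcases ha.eq_or_lt with rfl | ha
  · simp
  have hr1 : r - 1 ≠ 0 := by linarith
  set τ : ℝ := 2 * M * a ^ (-(r - 1)⁻¹) with hτ
  have hτ0 : 0 < τ := by positivity
  have hle : ∀ t ∈ Ioi (0 : ℝ), ENNReal.ofReal (t ^ (r - 3)) *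
        (if a ≤ (2 * M / t) ^ (r - 1) then ENNReal.ofReal (a ^ 2) else 0) ≤
      (Ioc 0 τ).indicator (fun t => ENNReal.ofReal (t ^ (r - 3)) * ENNReal.ofReal (a ^ 2)) t := by
    intro t ht
    have ht : 0 < t := ht
    split_ifs with h
    · have h1 : a ^ (r - 1)⁻¹ ≤ 2 * M / t := by
        rw [← Real.rpow_rpow_inv (x := 2 * M / t) (y := r - 1) (by positivity) hr1]
        exact Real.rpow_le_rpow ha.le h (inv_nonneg.2 (by linarith))
      have h2 : t ≤ τ := by
        rw [hτ, Real.rpow_neg ha.le, ← div_eq_mul_inv, le_div_iff₀ (by positivity)]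
        rw [le_div_iff₀ ht] at h1
        linarith
      rw [Set.indicator_of_mem (Set.mem_Ioc.2 ⟨ht, h2⟩)]
    · simp
  refine (setLIntegral_mono' measurableSet_Ioi hle).trans ?_
  refine (setLIntegral_le_lintegral _ _).trans ?_
  rw [lintegral_indicator measurableSet_Ioc, lintegral_mul_const _ (by fun_prop)]
  have hintg : IntervalIntegrable (fun t : ℝ => t ^ (r - 3)) volume 0 τ :=
    intervalIntegral.intervalIntegrable_rpow' (by linarith)
  rw [intervalIntegrable_iff_integrableOn_Ioc_of_le hτ0.le] at hintg
  rw [← ofReal_integral_eq_lintegral_ofReal hintg ((ae_restrict_iff' measurableSet_Ioc).2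
    (Filter.Eventually.of_forall fun t ht => Real.rpow_nonneg ht.1.le _)),
    ← intervalIntegral.integral_of_le hτ0.le, integral_rpow (Or.inl (by linarith)),
    ← ENNReal.ofReal_mul, ← ENNReal.ofReal_mul]
  · apply le_of_eq
    congr 1
    rw [show r - 3 + 1 = r - 2 by ring, Real.zero_rpow (by linarith), hτ,
      Real.mul_rpow (by positivity) (by positivity), ← Real.rpow_mul ha.le,
      ← Real.rpow_natCast a 2]
    have : a ^ (r / (r - 1)) = a ^ (-(r - 1)⁻¹ * (r - 2)) * a ^ ((2 : ℕ) : ℝ) := by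
      rw [← Real.rpow_add ha]
      congr 1
      push_cast
      field_simp
      ring
    rw [this]; ring
  · exact div_nonneg (by positivity) (by linarith)
  · rw [show r - 3 + 1 = r - 2 by ring, Real.zero_rpow (by linarith)]
    exact div_nonneg (by simp; positivity) (by linarith)

/-- Hausdorff-Young inequality `L^(r/(r-1)) → L^r`, `r > 2`, with a non-sharp constant. -/
lemma hausdorff_young {X : Type*} [MeasurableSpace X] (ν : Measure X) [IsFiniteMeasure ν]
    {Φ : X → ℂ} (hΦ : Measurable Φ) (hν : ν.map Φ ≤ volume) {g : X → ℂ} (hg : Measurable g)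
    {r : ℝ} (hr : 2 < r) {M : ℝ} (hM : 0 < M)
    (hgM : ∫⁻ z, ENNReal.ofReal (‖g z‖ ^ (r / (r - 1))) ∂ν ≤ ENNReal.ofReal M) :
    ∫⁻ ξ, ENNReal.ofReal (‖osc ν Φ g ξ‖ ^ r) ≤
      ENNReal.ofReal (r * (16 * π ^ 2) * (2 ^ (r - 2) / (r - 2)) * M ^ (r - 1)) := by
  have hm := measurable_osc ν hΦ hg
  rw [lintegral_rpow_eq_lintegral_meas_lt_mul _ (Filter.Eventually.of_forall fun ξ => norm_nonneg _)
    hm.norm.aemeasurable (by linarith)]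
  set P : ℝ → X → ENNReal := fun t z => ENNReal.ofReal (t ^ (r - 3)) *
    (if ‖g z‖ ≤ (2 * M / t) ^ (r - 1) then ENNReal.ofReal (‖g z‖ ^ 2) else 0) with hP
  have hPm : Measurable (Function.uncurry P) := by
    simp only [hP, Function.uncurry_def]
    refine Measurable.mul (by fun_prop) (Measurable.ite ?_ (by fun_prop) measurable_const)
    exact measurableSet_le (by fun_prop) (by fun_prop)
  have h1 : ∫⁻ t in Ioi (0 : ℝ), volume {ξ | t < ‖osc ν Φ g ξ‖} * ENNReal.ofReal (t ^ (r - 1)) ≤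
      ∫⁻ t in Ioi (0 : ℝ), ENNReal.ofReal (16 * π ^ 2) * ∫⁻ z, P t z ∂ν := by
    refine setLIntegral_mono' measurableSet_Ioi fun t ht => ?_
    have ht : 0 < t := ht
    refine (mul_le_mul_left (level_set_bound ν hΦ hν hg hr hM hgM ht) _).trans (le_of_eq ?_)
    simp only [hP]
    rw [lintegral_const_mul]
    · rw [mul_right_comm, ← mul_assoc, ← ENNReal.ofReal_mul (by positivity),
        ← ENNReal.ofReal_mul (by positivity)]
      congr 2
      · rw [mul_assoc, ← Real.rpow_add ht]; congr 2; ring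
      · ext z; rw [← ofReal_norm, ENNReal.ofReal_pow (norm_nonneg _)]
    · exact Measurable.ite (measurableSet_le (by fun_prop) (by fun_prop)) (by fun_prop)
        measurable_const
  have h2 : ∫⁻ t in Ioi (0 : ℝ), ∫⁻ z, P t z ∂ν ≤
      ENNReal.ofReal ((2 * M) ^ (r - 2) / (r - 2)) * ENNReal.ofReal M := by
    rw [lintegral_lintegral_swap hPm.aemeasurable]
    calc _ ≤ ∫⁻ z, ENNReal.ofReal ((2 * M) ^ (r - 2) / (r - 2)) *
          ENNReal.ofReal (‖g z‖ ^ (r / (r - 1))) ∂ν :=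
          lintegral_mono fun z => inner_integral_bound hr hM (norm_nonneg _)
      _ ≤ _ := by
          rw [lintegral_const_mul _ (by fun_prop)]
          gcongr
  calc _ ≤ ENNReal.ofReal r * (ENNReal.ofReal (16 * π ^ 2) *
        (ENNReal.ofReal ((2 * M) ^ (r - 2) / (r - 2)) * ENNReal.ofReal M)) := by
        gcongr
        refine h1.trans ?_
        rw [lintegral_const_mul' _ _ ENNReal.ofReal_ne_top]
        gcongr
    _ = _ := by
        have : 0 ≤ (2 * M) ^ (r - 2) / (r - 2) := div_nonneg (by positivity) (by linarith)
        rw [← ENNReal.ofReal_mul this, ← ENNReal.ofReal_mul (by positivity),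
          ← ENNReal.ofReal_mul (by linarith)]
        congr 1
        rw [Real.mul_rpow (by norm_num) hM.le, show r - 1 = (r - 2) + 1 by ring,
          Real.rpow_add hM, Real.rpow_one]
        ring

/-! ### The change of variables `(x, y) ↦ (x + y, x² + y²)` -/

/-- The open triangle `0 < y < x < 1`. -/
def tri : Set (ℝ × ℝ) := {p | 0 < p.2 ∧ p.2 < p.1 ∧ p.1 < 1}

lemma measurableSet_tri : MeasurableSet tri := by
  have h1 : MeasurableSet {p : ℝ × ℝ | 0 < p.2} := measurableSet_lt (by fun_prop) (by fun_prop)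
  have h2 : MeasurableSet {p : ℝ × ℝ | p.2 < p.1} := measurableSet_lt (by fun_prop) (by fun_prop)
  have h3 : MeasurableSet {p : ℝ × ℝ | p.1 < 1} := measurableSet_lt (by fun_prop) (by fun_prop)
  exact h1.inter (h2.inter h3)

/-- The measure `2(x - y) dx dy` on the triangle, the density being the Jacobian of
`(x, y) ↦ (x + y, x² + y²)`. -/
noncomputable def jacMeasure : Measure (ℝ × ℝ) :=
  (volume.restrict tri).withDensity fun p => ENNReal.ofReal (2 * (p.1 - p.2))

/-- The sum of the points of the parabola over `x` and `y`, as a complex number. -/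
def parabolaSum (p : ℝ × ℝ) : ℂ := ⟨p.1 + p.2, p.1 ^ 2 + p.2 ^ 2⟩

lemma measurable_parabolaSum : Measurable parabolaSum := by
  have : parabolaSum = fun p => Complex.measurableEquivRealProd.symm (p.1 + p.2, p.1 ^ 2 + p.2 ^ 2) := by
    ext p; simp [parabolaSum]
  rw [this]
  exact Complex.measurableEquivRealProd.symm.measurable.comp (by fun_prop)

lemma tri_subset : tri ⊆ Ioo 0 1 ×ˢ Ioo 0 1 := by
  rintro ⟨x, y⟩ ⟨h1, h2, h3⟩
  simp only at h1 h2 h3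
  exact ⟨⟨h1.trans h2, h3⟩, ⟨h1, h2.trans h3⟩⟩

instance : IsFiniteMeasure jacMeasure := by
  apply isFiniteMeasure_withDensity_ofReal
  have hfin : volume tri < ⊤ := by
    refine (measure_mono tri_subset).trans_lt ?_
    rw [Measure.volume_eq_prod, Measure.prod_prod]
    simp
  have : IsFiniteMeasure (volume.restrict tri) := ⟨by simpa using hfin⟩
  refine HasFiniteIntegral.of_bounded (C := 2) ?_
  filter_upwards [ae_restrict_mem measurableSet_tri] with p hp
  obtain ⟨h1, h2, h3⟩ := hp
  rw [Real.norm_eq_abs, abs_le]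
  constructor <;> linarith

lemma map_jacMeasure_le : jacMeasure.map parabolaSum ≤ volume := by
  set f : ℝ × ℝ → ℝ × ℝ := fun p => (p.1 + p.2, p.1 ^ 2 + p.2 ^ 2) with hf
  set f' : ℝ × ℝ → (ℝ × ℝ →L[ℝ] ℝ × ℝ) := fun p =>
    LinearMap.toContinuousLinearMap (Matrix.toLin (.finTwoProd ℝ) (.finTwoProd ℝ)
      !![1, 1; 2 * p.1, 2 * p.2]) with hf'
  have hder : ∀ p ∈ tri, HasFDerivWithinAt f (f' p) tri p := by
    intro p _
    apply HasFDerivAt.hasFDerivWithinAt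
    simp only [hf', hf]
    rw [Matrix.toLin_finTwoProd_toContinuousLinearMap]
    convert! HasFDerivAt.prodMk (𝕜 := ℝ)
      ((hasFDerivAt_fst (p := p)).add (hasFDerivAt_snd (p := p)))
      ((HasFDerivAt.pow (hasFDerivAt_fst (𝕜 := ℝ) (p := p)) 2).add
        (HasFDerivAt.pow (hasFDerivAt_snd (𝕜 := ℝ) (p := p)) 2)) using 2 <;>
    simp
  have hinj : InjOn f tri := by
    rintro ⟨x, y⟩ ⟨_, h2, _⟩ ⟨x', y'⟩ ⟨_, h2', _⟩ h
    simp only [hf, Prod.mk.injEq] at h h2 h2'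
    obtain ⟨e1, e2⟩ := h
    have e3 : (x - y) ^ 2 = (x' - y') ^ 2 := by nlinarith
    have e4 : x - y = x' - y' := by
      rcases sq_eq_sq_iff_eq_or_eq_neg.1 e3 with h | h <;> linarith
    ext <;> simp only <;> linarith
  have hdet : ∀ p, (f' p).det = 2 * p.2 - 2 * p.1 := by
    intro p
    simp only [hf', LinearMap.det_toContinuousLinearMap, LinearMap.det_toLin,
      Matrix.det_fin_two_of]
    ring
  have h1 := map_withDensity_abs_det_fderiv_eq_addHaar (volume : Measure (ℝ × ℝ))
    measurableSet_tri.nullMeasurableSet hder hinj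
  have h2 : (volume.restrict tri).withDensity (fun p => ENNReal.ofReal |(f' p).det|) =
      jacMeasure := by
    apply withDensity_congr_ae
    filter_upwards [ae_restrict_mem measurableSet_tri] with p hp
    rw [hdet, abs_of_neg (by linarith [hp.2.1])]
    congr 1; ring
  rw [h2] at h1
  have h3 : parabolaSum = Complex.measurableEquivRealProd.symm ∘ f := by
    ext p; simp [parabolaSum, hf]
  have hfm : Measurable f := by fun_prop
  rw [h3, ← Measure.map_map Complex.measurableEquivRealProd.symm.measurable hfm, h1]
  calc _ ≤ Measure.map Complex.measurableEquivRealProd.symm volume :=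
        Measure.map_mono Measure.restrict_le_self Complex.measurableEquivRealProd.symm.measurable
    _ = volume := (Complex.volume_preserving_equiv_real_prod.symm).map_eq

lemma sq_integral_eq_tri {u : ℝ → ℂ} (hu : IntegrableOn u (Ioo 0 1)) :
    (∫ x in Ioo (0 : ℝ) 1, u x) ^ 2 = 2 * ∫ p in tri, u p.1 * u p.2 := by
  have hU : IntegrableOn (fun p : ℝ × ℝ => u p.1 * u p.2) (Ioo 0 1 ×ˢ Ioo 0 1) := by
    have := hu.mul_prod hu
    rwa [Measure.prod_restrict] at this
  have hsm : MeasurableSet (Prod.swap ⁻¹' tri : Set (ℝ × ℝ)) :=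
    measurable_swap measurableSet_tri
  have hdiag : (volume : Measure (ℝ × ℝ)) {p | p.1 = p.2} = 0 := by
    rw [Measure.volume_eq_prod,
      Measure.measure_prod_null (measurableSet_eq_fun measurable_fst measurable_snd)]
    refine Filter.Eventually.of_forall fun x => ?_
    have : Prod.mk x ⁻¹' {p : ℝ × ℝ | p.1 = p.2} = {x} := by
      ext y; simp [eq_comm]
    simp [this]
  have hae : (Ioo (0 : ℝ) 1 ×ˢ Ioo (0 : ℝ) 1 : Set (ℝ × ℝ)) =ᵐ[volume] (tri ∪ Prod.swap ⁻¹' tri : Set (ℝ × ℝ)) := by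
    have hnd : ∀ᵐ p : ℝ × ℝ, p.1 ≠ p.2 := by
      rw [ae_iff]; simpa using hdiag
    filter_upwards [hnd] with p hp
    apply propext
    constructor
    · rintro ⟨⟨a, b⟩, ⟨c, d⟩⟩
      rcases lt_or_gt_of_ne hp with h | h
      · exact Or.inr ⟨a, h, d⟩
      · exact Or.inl ⟨c, h, b⟩
    · rintro (h | h)
      · exact tri_subset h
      · have := tri_subset h
        exact ⟨this.2, this.1⟩
  have hdisj : Disjoint tri (Prod.swap ⁻¹' tri) := by
    rw [Set.disjoint_left]
    rintro ⟨x, y⟩ ⟨_, h, _⟩ ⟨_, h', _⟩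
    simp only [Prod.swap] at h h'
    linarith
  have hswap : ∫ p in Prod.swap ⁻¹' tri, u p.1 * u p.2 = ∫ p in tri, u p.1 * u p.2 := by
    have := (Measure.measurePreserving_swap (μ := (volume : Measure ℝ))
      (ν := (volume : Measure ℝ))).setIntegral_preimage_emb
      MeasurableEquiv.prodComm.measurableEmbedding (fun p : ℝ × ℝ => u p.1 * u p.2) tri
    rw [Measure.volume_eq_prod, ← this]
    refine integral_congr_ae (Filter.Eventually.of_forall fun p => ?_)
    simp [mul_comm]
  rw [sq, ← integral_prod_mul, Measure.prod_restrict, ← Measure.volume_eq_prod,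
    setIntegral_congr_set hae, setIntegral_union hdisj hsm (hU.mono_set tri_subset)
    (hU.mono_set fun p hp => ⟨(tri_subset hp).2, (tri_subset hp).1⟩), hswap, two_mul]

/-- The function `f(x) f(y)` on the triangle, as a density relative to `jacMeasure`. -/
noncomputable def pairDensity (f : ℝ → ℂ) (p : ℝ × ℝ) : ℂ :=
  f p.1 * f p.2 / ((2 * (p.1 - p.2) : ℝ) : ℂ)

lemma sq_parabolaExtension {f : ℝ → ℂ} (hf : Measurable f) {B : ℝ} (hB : ∀ x, ‖f x‖ ≤ B) (ξ : ℂ) :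
    parabolaExtension f ξ ^ 2 = 2 * osc jacMeasure parabolaSum (pairDensity f) ξ := by
  unfold parabolaExtension osc jacMeasure
  rw [intervalIntegral.integral_of_le zero_le_one, integral_Ioc_eq_integral_Ioo,
    sq_integral_eq_tri, integral_withDensity_eq_integral_toReal_smul (by fun_prop)
    (Filter.Eventually.of_forall fun p => ENNReal.ofReal_lt_top)]
  · congr 1
    refine setIntegral_congr_fun measurableSet_tri fun p hp => ?_
    have hp' : 0 < p.1 - p.2 := by linarith [hp.2.1]
    simp only [pairDensity]
    rw [ENNReal.toReal_ofReal (by linarith), Complex.real_smul]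
    have hne : ((2 * (p.1 - p.2) : ℝ) : ℂ) ≠ 0 := by
      rw [Complex.ofReal_ne_zero]; linarith
    have hph : Complex.exp (-Complex.I * (inner ℝ (parabolaSum p) ξ : ℝ)) =
        Complex.exp (-Complex.I * ((ξ.re * p.1 + ξ.im * p.1 ^ 2 : ℝ) : ℂ)) *
        Complex.exp (-Complex.I * ((ξ.re * p.2 + ξ.im * p.2 ^ 2 : ℝ) : ℂ)) := by
      rw [← Complex.exp_add]
      congr 1
      rw [← mul_add, ← Complex.ofReal_add]
      congr 2
      rw [Complex.inner]
      simp [parabolaSum]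
      ring
    rw [hph]
    field_simp
  · have hfin : IsFiniteMeasure (volume.restrict (Ioo (0 : ℝ) 1)) := ⟨by simp⟩
    refine (integrable_const B).mono' (by fun_prop) (Filter.Eventually.of_forall fun x => ?_)
    rw [norm_mul, Complex.norm_exp]
    have : (-Complex.I * ((ξ.re * x + ξ.im * x ^ 2 : ℝ) : ℂ)).re = 0 := by
      rw [Complex.mul_re, Complex.ofReal_im]; simp
    rw [this, Real.exp_zero, one_mul]
    exact hB x

/-! ### The weighted `L^s` norm on the triangle -/

lemma lintegral_pow_kernel {κ : ℝ} (hκ : κ < 1) :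
    ∫⁻ w : ℝ, (Ioo (0 : ℝ) 1).indicator (fun w => ENNReal.ofReal (w ^ (-κ))) w =
      ENNReal.ofReal (1 / (1 - κ)) := by
  rw [lintegral_indicator measurableSet_Ioo, restrict_Ioo_eq_restrict_Ioc]
  have hintg : IntervalIntegrable (fun t : ℝ => t ^ (-κ)) volume 0 1 :=
    intervalIntegral.intervalIntegrable_rpow' (by linarith)
  rw [intervalIntegrable_iff_integrableOn_Ioc_of_le zero_le_one] at hintg
  rw [← ofReal_integral_eq_lintegral_ofReal hintg ((ae_restrict_iff' measurableSet_Ioc).2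
    (Filter.Eventually.of_forall fun t ht => Real.rpow_nonneg ht.1.le _)),
    ← intervalIntegral.integral_of_le zero_le_one, integral_rpow (Or.inl (by linarith))]
  rw [Real.one_rpow, Real.zero_rpow (by linarith), neg_add_eq_sub, sub_zero]

/-- The `L^(r/(r-1))` norm of the density is controlled by an `L^(2r/(r-1))` norm of `f`: the Jacobian
leaves the kernel `(x - y)^(-1/(r-1))`, which is integrable because `r > 2`. -/
lemma lintegral_pairDensity {r : ℝ} (hr : 2 < r) {f : ℝ → ℂ} (hf : Measurable f) :
    ∫⁻ p, ENNReal.ofReal (‖pairDensity f p‖ ^ (r / (r - 1))) ∂jacMeasure ≤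
      ENNReal.ofReal (1 / (1 - (r - 1)⁻¹)) *
        ∫⁻ x in Ioo (0 : ℝ) 1, ENNReal.ofReal (‖f x‖ ^ (2 * r / (r - 1))) := by
  have hr1 : 0 < r - 1 := by linarith
  set s := r / (r - 1) with hs
  set κ := (r - 1)⁻¹ with hκ
  have hκ0 : 0 < κ := inv_pos.2 hr1
  have hκ1 : κ < 1 := inv_lt_one_of_one_lt₀ (by linarith)
  have hsκ : s = 1 + κ := by rw [hs, hκ]; field_simp; ring
  set k : ℝ → ENNReal := (Ioo (0 : ℝ) 1).indicator (fun w => ENNReal.ofReal (w ^ (-κ))) with hk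
  have hkm : Measurable k := Measurable.indicator (by fun_prop) measurableSet_Ioo
  set φ : ℝ → ENNReal := fun x => ENNReal.ofReal (‖f x‖ ^ (2 * r / (r - 1))) with hφ
  have hφm : Measurable φ := by fun_prop
  have hpdm : Measurable (pairDensity f) := by unfold pairDensity; fun_prop
  unfold jacMeasure
  rw [lintegral_withDensity_eq_lintegral_mul _ (by fun_prop) (by fun_prop)]
  set μ : Measure ℝ := volume.restrict (Ioo (0 : ℝ) 1) with hμ
  have hpt : ∀ p ∈ tri, ((fun p : ℝ × ℝ => ENNReal.ofReal (2 * (p.1 - p.2))) *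
      fun p => ENNReal.ofReal (‖pairDensity f p‖ ^ s)) p ≤
      2⁻¹ * (φ p.1 * k (p.1 - p.2) + φ p.2 * k (p.1 - p.2)) := by
    rintro ⟨x, y⟩ ⟨h1, h2, h3⟩
    simp only at h1 h2 h3
    have hd : 0 < x - y := by linarith
    have hmem : x - y ∈ Ioo (0 : ℝ) 1 := ⟨hd, by linarith⟩
    simp only [Pi.mul_apply, hφ, hk, Set.indicator_of_mem hmem]
    rw [show (2⁻¹ : ENNReal) = ENNReal.ofReal (2⁻¹) by
        rw [ENNReal.ofReal_inv_of_pos (by norm_num)]; simp,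
      ← ENNReal.ofReal_mul (by positivity), ← ENNReal.ofReal_mul (by positivity),
      ← ENNReal.ofReal_mul (by positivity), ← ENNReal.ofReal_add (by positivity) (by positivity),
      ← ENNReal.ofReal_mul (by positivity)]
    apply ENNReal.ofReal_le_ofReal
    have e1 : ‖pairDensity f (x, y)‖ ^ s = ‖f x‖ ^ s * ‖f y‖ ^ s * (2 * (x - y)) ^ (-s) := by
      simp only [pairDensity]
      rw [norm_div, norm_mul, Complex.norm_real, Real.norm_of_nonneg (by linarith),
        Real.div_rpow (by positivity) (by linarith), Real.mul_rpow (by positivity) (by positivity),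
        Real.rpow_neg (by linarith), div_eq_mul_inv]
    have e2 : ∀ a : ℝ, 0 ≤ a → a ^ (2 * r / (r - 1)) = (a ^ s) ^ 2 := by
      intro a ha
      rw [← Real.rpow_natCast (a ^ s) 2, ← Real.rpow_mul ha, hs]; congr 1; push_cast; ring
    rw [e1, e2 _ (norm_nonneg _), e2 _ (norm_nonneg _)]
    have e3 : 2 * (x - y) * (2 * (x - y)) ^ (-s) ≤ (x - y) ^ (-κ) := by
      have : 2 * (x - y) * (2 * (x - y)) ^ (-s) = (2 * (x - y)) ^ (-κ) := by
        rw [← Real.rpow_one_add' (by linarith) (by rw [hsκ]; linarith), hsκ]; congr 1; ring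
      rw [this]
      exact Real.rpow_le_rpow_of_nonpos hd (by linarith) (by linarith)
    have e4 : 0 ≤ (x - y) ^ (-κ) := by positivity
    calc 2 * (x - y) * (‖f x‖ ^ s * ‖f y‖ ^ s * (2 * (x - y)) ^ (-s))
        = (‖f x‖ ^ s * ‖f y‖ ^ s) * (2 * (x - y) * (2 * (x - y)) ^ (-s)) := by ring
      _ ≤ (‖f x‖ ^ s * ‖f y‖ ^ s) * (x - y) ^ (-κ) := by gcongr
      _ ≤ _ := by nlinarith [mul_nonneg e4 (sq_nonneg (‖f x‖ ^ s - ‖f y‖ ^ s))]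
  have hk1 : ∀ x, ∫⁻ y, k (x - y) ∂μ ≤ ENNReal.ofReal (1 / (1 - κ)) := by
    intro x
    rw [← lintegral_pow_kernel hκ1, ← lintegral_sub_left_eq_self (μ := volume) _ x]
    exact setLIntegral_le_lintegral _ _
  have hk2 : ∀ y, ∫⁻ x, k (x - y) ∂μ ≤ ENNReal.ofReal (1 / (1 - κ)) := by
    intro y
    rw [← lintegral_pow_kernel hκ1, ← lintegral_sub_right_eq_self (μ := volume) _ y]
    exact setLIntegral_le_lintegral _ _
  have b1 : ∫⁻ p, φ p.1 * k (p.1 - p.2) ∂(μ.prod μ) ≤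
      ENNReal.ofReal (1 / (1 - κ)) * ∫⁻ x, φ x ∂μ := by
    rw [lintegral_prod _ (by fun_prop), ← lintegral_const_mul _ (by fun_prop)]
    refine lintegral_mono fun x => ?_
    dsimp only
    rw [lintegral_const_mul _ (by fun_prop), mul_comm]
    exact mul_le_mul_left (hk1 x) _
  have b2 : ∫⁻ p, φ p.2 * k (p.1 - p.2) ∂(μ.prod μ) ≤
      ENNReal.ofReal (1 / (1 - κ)) * ∫⁻ x, φ x ∂μ := by
    rw [lintegral_prod_symm _ (by fun_prop), ← lintegral_const_mul _ (by fun_prop)]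
    refine lintegral_mono fun y => ?_
    dsimp only
    rw [lintegral_const_mul _ (by fun_prop), mul_comm]
    exact mul_le_mul_left (hk2 y) _
  calc _ ≤ ∫⁻ p in tri, 2⁻¹ * (φ p.1 * k (p.1 - p.2) + φ p.2 * k (p.1 - p.2)) :=
        setLIntegral_mono' measurableSet_tri hpt
    _ ≤ ∫⁻ p in Ioo 0 1 ×ˢ Ioo 0 1, 2⁻¹ * (φ p.1 * k (p.1 - p.2) + φ p.2 * k (p.1 - p.2)) :=
        lintegral_mono_set tri_subset
    _ = ∫⁻ p, 2⁻¹ * (φ p.1 * k (p.1 - p.2) + φ p.2 * k (p.1 - p.2)) ∂(μ.prod μ) := by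
        rw [hμ, Measure.prod_restrict, Measure.volume_eq_prod]
    _ ≤ 2⁻¹ * (ENNReal.ofReal (1 / (1 - κ)) * ∫⁻ x, φ x ∂μ +
          ENNReal.ofReal (1 / (1 - κ)) * ∫⁻ x, φ x ∂μ) := by
        rw [lintegral_const_mul _ (by fun_prop), lintegral_add_left (by fun_prop)]
        exact mul_le_mul_right (add_le_add b1 b2) _
    _ = _ := by
        rw [← two_mul, ← mul_assoc, ENNReal.inv_mul_cancel (by simp) (by simp), one_mul]

/-! ### The extension estimate -/

/-- The extension estimate for arbitrary bounded measurable functions. -/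
lemma extension_bound {q : ℝ} (hq : 4 < q) : ∃ C : ℝ, 0 ≤ C ∧ ∀ f : ℝ → ℂ, Measurable f →
    ∀ B : ℝ, (∀ x, ‖f x‖ ≤ B) →
      (∫ ξ : ℂ, ‖parabolaExtension f ξ‖ ^ q) ^ (1 / q) ≤
        C * (∫ x in (0:ℝ)..1, ‖f x‖ ^ (2 * q / (q - 2))) ^ ((q - 2) / (2 * q)) := by
  set r : ℝ := q / 2 with hrdef
  have hr : 2 < r := by rw [hrdef]; linarith
  have hqr : q = 2 * r := by rw [hrdef]; ring
  have hp : 2 * q / (q - 2) = 2 * r / (r - 1) := by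
    have h1 : r - 1 ≠ 0 := by linarith
    have h2 : q - 2 ≠ 0 := by linarith
    field_simp
    rw [hqr]; ring
  have hκ1 : (r - 1)⁻¹ < 1 := inv_lt_one_of_one_lt₀ (by linarith)
  set D : ℝ := 1 / (1 - (r - 1)⁻¹) with hD
  have hD0 : 0 < D := by rw [hD]; exact one_div_pos.2 (by linarith)
  set c : ℝ := r * (16 * π ^ 2) * (2 ^ (r - 2) / (r - 2)) with hc
  have hc0 : 0 ≤ c := by
    have : 0 < r - 2 := by linarith
    have : 0 < r := by linarith
    positivity
  refine ⟨(2 ^ r * (c * D ^ (r - 1))) ^ (1 / q), by positivity, fun f hf B hB => ?_⟩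
  rw [hp]
  set I : ℝ := ∫ x in (0:ℝ)..1, ‖f x‖ ^ (2 * r / (r - 1)) with hI
  have hIoo : I = ∫ x in Ioo (0 : ℝ) 1, ‖f x‖ ^ (2 * r / (r - 1)) := by
    rw [hI, intervalIntegral.integral_of_le zero_le_one, integral_Ioc_eq_integral_Ioo]
  have hp0 : 0 < 2 * r / (r - 1) := div_pos (by linarith) (by linarith)
  have hI0 : 0 ≤ I := by rw [hIoo]; exact integral_nonneg fun x => by positivity
  have hIint : IntegrableOn (fun x => ‖f x‖ ^ (2 * r / (r - 1))) (Ioo 0 1) := by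
    have hfin : IsFiniteMeasure (volume.restrict (Ioo (0 : ℝ) 1)) := ⟨by simp⟩
    refine (integrable_const (B ^ (2 * r / (r - 1)))).mono' (hf.norm.pow_const _).aestronglyMeasurable
      (Filter.Eventually.of_forall fun x => ?_)
    rw [Real.norm_of_nonneg (by positivity)]
    exact Real.rpow_le_rpow (norm_nonneg _) (hB x) hp0.le
  have hRHS0 : 0 ≤ (2 ^ r * (c * D ^ (r - 1))) ^ (1 / q) * I ^ ((q - 2) / (2 * q)) := by positivity
  have hq0 : 0 < q := by linarith
  -- The interpolation lemma needs a strictly positive norm, so `f = 0` almost everywhere is separate.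
  rcases hI0.eq_or_lt with hI00 | hIpos
  · have hz : ∀ᵐ x ∂(volume.restrict (Ioo (0 : ℝ) 1)), f x = 0 := by
      rw [hIoo] at hI00
      have := (integral_eq_zero_iff_of_nonneg (fun x => by positivity) hIint).1 hI00.symm
      filter_upwards [this] with x hx
      simpa using (Real.rpow_eq_zero (norm_nonneg _) hp0.ne').1 hx
    have hE : ∀ ξ, parabolaExtension f ξ = 0 := by
      intro ξ
      unfold parabolaExtension
      rw [intervalIntegral.integral_of_le zero_le_one, integral_Ioc_eq_integral_Ioo]
      apply integral_eq_zero_of_ae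
      filter_upwards [hz] with x hx
      simp [hx]
    simp_rw [hE]
    rw [norm_zero, Real.zero_rpow hq0.ne', integral_zero, Real.zero_rpow (by positivity)]
    exact hRHS0
  have hpdm : Measurable (pairDensity f) := by unfold pairDensity; fun_prop
  have hgM : ∫⁻ z, ENNReal.ofReal (‖pairDensity f z‖ ^ (r / (r - 1))) ∂jacMeasure ≤
      ENNReal.ofReal (D * I) := by
    refine (lintegral_pairDensity hr hf).trans (le_of_eq ?_)
    rw [ENNReal.ofReal_mul hD0.le, hIoo, ofReal_integral_eq_lintegral_ofReal hIint
      (Filter.Eventually.of_forall fun x => by positivity)]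
  have hHY := hausdorff_young jacMeasure measurable_parabolaSum map_jacMeasure_le hpdm hr
    (mul_pos hD0 hIpos) hgM
  have hpt : ∀ ξ, ‖parabolaExtension f ξ‖ ^ q =
      2 ^ r * ‖osc jacMeasure parabolaSum (pairDensity f) ξ‖ ^ r := by
    intro ξ
    rw [hqr, Real.rpow_mul (norm_nonneg _), Real.rpow_two, ← norm_pow, sq_parabolaExtension hf hB,
      norm_mul, Real.mul_rpow (norm_nonneg _) (norm_nonneg _)]
    simp
  have hintg : ∫ ξ : ℂ, ‖parabolaExtension f ξ‖ ^ q ≤ 2 ^ r * (c * D ^ (r - 1)) * I ^ (r - 1) := by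
    simp_rw [hpt]
    rw [integral_const_mul, mul_assoc (2 ^ r)]
    gcongr
    have hm := measurable_osc jacMeasure measurable_parabolaSum hpdm
    rw [integral_eq_lintegral_of_nonneg_ae (Filter.Eventually.of_forall fun x => by positivity)
      (hm.norm.pow_const r).aestronglyMeasurable]
    refine ENNReal.toReal_le_of_le_ofReal (by positivity) (hHY.trans (le_of_eq ?_))
    rw [Real.mul_rpow hD0.le hI0, mul_assoc c]
  calc _ ≤ (2 ^ r * (c * D ^ (r - 1)) * I ^ (r - 1)) ^ (1 / q) :=
        Real.rpow_le_rpow (integral_nonneg fun ξ => by positivity) hintg (by positivity)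
    _ = _ := by
        rw [Real.mul_rpow (by positivity) (by positivity), ← Real.rpow_mul hI0]
        congr 2
        rw [hqr]; field_simp

lemma lp_le_lq {q : ℝ} (hq : 4 < q) {f : ℝ → ℂ} (hf : Measurable f) {B : ℝ}
    (hB : ∀ x, ‖f x‖ ≤ B) :
    (∫ x in (0:ℝ)..1, ‖f x‖ ^ (2 * q / (q - 2))) ^ ((q - 2) / (2 * q)) ≤
      (∫ x in (0:ℝ)..1, ‖f x‖ ^ q) ^ (1 / q) := by
  rw [intervalIntegral.integral_of_le zero_le_one, intervalIntegral.integral_of_le zero_le_one]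
  set μ : Measure ℝ := volume.restrict (Ioc (0 : ℝ) 1) with hμ
  have hprob : IsProbabilityMeasure μ := ⟨by simp [hμ]⟩
  have hintg : ∀ a : ℝ, 0 ≤ a → Integrable (fun x => ‖f x‖ ^ a) μ := by
    intro a ha
    refine (integrable_const (B ^ a)).mono' (by fun_prop) (Filter.Eventually.of_forall fun x => ?_)
    rw [Real.norm_of_nonneg (by positivity)]
    exact Real.rpow_le_rpow (norm_nonneg _) (hB x) ha
  set p : ℝ := 2 * q / (q - 2) with hp
  have hq2 : 0 < q - 2 := by linarith
  have hp0 : 0 < p := div_pos (by linarith) hq2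
  have hpq : p ≤ q := by rw [hp, div_le_iff₀ hq2]; nlinarith
  have hpinv : (q - 2) / (2 * q) = 1 / p := by rw [hp, one_div_div]
  have hm : 1 ≤ q / p := by rwa [one_le_div hp0]
  have e : ∀ x, ‖f x‖ ^ q = (‖f x‖ ^ p) ^ (q / p) := by
    intro x; rw [← Real.rpow_mul (norm_nonneg _)]; congr 1; field_simp
  have hJ := (convexOn_rpow hm).map_integral_le (μ := μ) (f := fun x => ‖f x‖ ^ p)
    (Real.continuous_rpow_const (by positivity)).continuousOn isClosed_Ici
    (Filter.Eventually.of_forall fun x => by simp only [Set.mem_Ici]; positivity) (hintg p hp0.le)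
    (by
      refine (hintg q (by linarith)).congr (Filter.Eventually.of_forall fun x => ?_)
      simp only [Function.comp]; exact e x)
  have hI0 : 0 ≤ ∫ x, ‖f x‖ ^ p ∂μ := integral_nonneg fun x => by positivity
  rw [hpinv]
  simp_rw [← e] at hJ
  calc (∫ x, ‖f x‖ ^ p ∂μ) ^ (1 / p) = ((∫ x, ‖f x‖ ^ p ∂μ) ^ (q / p)) ^ (1 / q) := by
        rw [← Real.rpow_mul hI0]; congr 1; field_simp
    _ ≤ _ := Real.rpow_le_rpow (by positivity) hJ (by positivity)

/-- The restriction to `(0, 1)` keeps clear of the point `1`, where a step function is unconstrained. -/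
lemma exists_bounded_measurable_of_step (t : ℕ) (F : ℝ → ℂ)
    (hF : ∀ n ∈ Finset.Icc (1 : ℕ) (2 ^ t), ∃ cst : ℂ,
        ∀ x ∈ Set.Ico (((n : ℝ) - 1) * 2 ^ (-(t : ℤ))) ((n : ℝ) * 2 ^ (-(t : ℤ))), F x = cst) :
    ∃ f : ℝ → ℂ, Measurable f ∧ (∃ B : ℝ, ∀ x, ‖f x‖ ≤ B) ∧ ∀ x ∈ Ioo (0 : ℝ) 1, F x = f x := by
  choose! c hc using hF
  set d : ℕ → ℂ := fun n => if n ∈ Finset.Icc (1 : ℕ) (2 ^ t) then c n else 0 with hd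
  refine ⟨fun x => d (⌊x * 2 ^ t⌋₊ + 1), ?_, ⟨∑ n ∈ Finset.Icc (1 : ℕ) (2 ^ t), ‖c n‖, ?_⟩, ?_⟩
  · have : Measurable fun n : ℕ => d (n + 1) := measurable_from_nat
    exact this.comp (Nat.measurable_floor.comp (by fun_prop))
  · intro x
    simp only [hd]
    split_ifs with h
    · exact Finset.single_le_sum (f := fun n => ‖c n‖) (fun _ _ => norm_nonneg _) h
    · rw [norm_zero]; exact Finset.sum_nonneg fun _ _ => norm_nonneg _
  · intro x hx
    have h2 : (0 : ℝ) < 2 ^ t := by positivity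
    have hx0 : 0 ≤ x * 2 ^ t := by have := hx.1; positivity
    have hlt : ⌊x * 2 ^ t⌋₊ < 2 ^ t := by
      rw [Nat.floor_lt hx0]; push_cast
      nlinarith [hx.2]
    have hmem : ⌊x * 2 ^ t⌋₊ + 1 ∈ Finset.Icc (1 : ℕ) (2 ^ t) := by
      rw [Finset.mem_Icc]; omega
    simp only [hd, if_pos hmem]
    apply hc _ hmem
    rw [zpow_neg, zpow_natCast, ← div_eq_mul_inv, ← div_eq_mul_inv]
    push_cast
    constructor
    · rw [div_le_iff₀ h2, add_sub_cancel_right]; exact Nat.floor_le hx0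
    · rw [lt_div_iff₀ h2]; exact Nat.lt_floor_add_one _

/-- Global `L^q` bound for the extension of dyadic step functions: if `F` is constant on each
dyadic interval `[(n−1)2^{−t}, n·2^{−t})`, `1 ≤ n ≤ 2^t`, then
`‖EF‖_{L^q(ℝ²)} ≤ C_q ‖F‖_{L^{2q/(q−2)}([0,1])} ≤ C_q ‖F‖_{L^q([0,1])}`,
with `C_q` independent of `t`. -/
theorem extension_dyadic_step_global :
    ∀ q : ℝ, q > 4 → ∃ C : ℝ, 0 ≤ C ∧ ∀ t : ℕ, ∀ F : ℝ → ℂ,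
      (∀ n ∈ Finset.Icc (1 : ℕ) (2 ^ t), ∃ cst : ℂ,
        ∀ x ∈ Set.Ico (((n : ℝ) - 1) * 2 ^ (-(t : ℤ))) ((n : ℝ) * 2 ^ (-(t : ℤ))),
          F x = cst) →
      (∫ ξ : ℂ, ‖parabolaExtension F ξ‖ ^ q) ^ (1 / q) ≤
          C * (∫ x in (0:ℝ)..1, ‖F x‖ ^ (2 * q / (q - 2))) ^ ((q - 2) / (2 * q)) ∧
        C * (∫ x in (0:ℝ)..1, ‖F x‖ ^ (2 * q / (q - 2))) ^ ((q - 2) / (2 * q)) ≤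
          C * (∫ x in (0:ℝ)..1, ‖F x‖ ^ q) ^ (1 / q) := by
  intro q hq
  obtain ⟨C, hC, hmain⟩ := extension_bound hq
  refine ⟨C, hC, fun t F hF => ?_⟩
  obtain ⟨f, hf, ⟨B, hB⟩, hFf⟩ := exists_bounded_measurable_of_step t F hF
  have hE : ∀ ξ, parabolaExtension F ξ = parabolaExtension f ξ := by
    intro ξ
    unfold parabolaExtension
    rw [intervalIntegral.integral_of_le zero_le_one, integral_Ioc_eq_integral_Ioo,
      intervalIntegral.integral_of_le zero_le_one, integral_Ioc_eq_integral_Ioo]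
    exact setIntegral_congr_fun measurableSet_Ioo fun x hx => by simp only [hFf x hx]
  have hn : ∀ a : ℝ, ∫ x in (0:ℝ)..1, ‖F x‖ ^ a = ∫ x in (0:ℝ)..1, ‖f x‖ ^ a := by
    intro a
    rw [intervalIntegral.integral_of_le zero_le_one, integral_Ioc_eq_integral_Ioo,
      intervalIntegral.integral_of_le zero_le_one, integral_Ioc_eq_integral_Ioo]
    exact setIntegral_congr_fun measurableSet_Ioo fun x hx => by simp only [hFf x hx]
  simp_rw [hE, hn]
  exact ⟨hmain f hf B hB, mul_le_mul_of_nonneg_left (lp_le_lq hq hf hB) hC⟩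
end

section
/- For every δ ∈ (0, 1/2] there exists a constant C_δ such that the following holds for every ε ∈ (0,1]: if ψ: ℝ → ℂ is a twice continuously differentiable ε-periodic function satisfying |ψ(y)| ≤ 1, |ψ′(y)| ≤ ε^{−1}, and |ψ″(y)| ≤ ε^{−2} for all y ∈ ℝ, then for every real a and every λ with 1 ≤ λ ≤ ε^{−1/(1−δ)}, | ∫_{−1}^{1} ψ(y) e^{i(λ y² − a y)} dy | ≤ C_δ λ^{−1/2}. (The stationary phase / van der Corput estimate persists for amplitudes that are stable at scale ε, with constant independent of ε.) -/
/-!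
The frequencies of `ψ` do not matter, only the `ℓ¹` norm of its Fourier coefficients does. Write
`ψ(y) = ∑ₖ cₖ e^{2πiky/ε}`. Integrating by parts twice over one period gives
`cₖ = (ε / 2πik)² cₖ(ψ″)`, so that `|cₖ| ≤ 1 / k²` for `k ≠ 0`: the factor `ε²` cancels exactly
against `|ψ″| ≤ ε⁻²` (`norm_fourierCoeffOn_le_of_stable`). Hence `∑ |cₖ|` is bounded independently
of `ε`.

Multiplication by `e^{2πiky/ε}` only shifts the linear coefficient `a` of the phase, and the
van der Corput bound `norm_integral_quadratic_phase_le` for the pure phase `λy² - by` is uniform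
in `b`. Summing over `k` gives the theorem. The quadratic bound itself follows, by completing the
square and rescaling, from the boundedness of the Fresnel integrals `∫₀ˣ e^{is²} ds`.
-/

open Real

/-- The Fresnel integral is bounded: beyond `1` the integrand is, up to an error `O(s⁻²)`, the
derivative of the bounded function `e^{is²} / (2is)`. -/
lemma norm_fresnel_le_of_nonneg (x : ℝ) (hx : 0 ≤ x) :
    ‖∫ s in (0:ℝ)..x, Complex.exp (Complex.I * ((s ^ 2 : ℝ) : ℂ))‖ ≤ 5 / 2 := by
  have hnorm : ∀ s : ℝ, ‖Complex.exp (Complex.I * ((s ^ 2 : ℝ) : ℂ))‖ = 1 := fun s => by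
    rw [mul_comm]; exact Complex.norm_exp_ofReal_mul_I _
  have hcont : Continuous fun s : ℝ => Complex.exp (Complex.I * ((s ^ 2 : ℝ) : ℂ)) := by
    fun_prop
  have htriv : ∀ x : ℝ, 0 ≤ x →
      ‖∫ s in (0:ℝ)..x, Complex.exp (Complex.I * ((s ^ 2 : ℝ) : ℂ))‖ ≤ x := fun x hx => by
    have := intervalIntegral.norm_integral_le_of_norm_le_const (a := 0) (b := x) (C := 1)
      (f := fun s : ℝ => Complex.exp (Complex.I * ((s ^ 2 : ℝ) : ℂ)))
      (fun s _ => (hnorm s).le)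
    simpa [abs_of_nonneg hx] using this
  rcases le_total x 1 with h1 | h1
  · linarith [htriv x hx]
  set G : ℝ → ℂ := fun s =>
    Complex.exp (Complex.I * ((s ^ 2 : ℝ) : ℂ)) * (1 / (2 * Complex.I)) * (s : ℂ)⁻¹ with hG
  have hGn : ∀ s : ℝ, 0 < s → ‖G s‖ = 1 / (2 * s) := fun s hs => by
    simp only [hG, norm_mul, hnorm, norm_div, norm_inv, Complex.norm_I, norm_one,
      Complex.norm_real, Real.norm_eq_abs, abs_of_pos hs, Complex.norm_two]
    field_simp
  have hGd : ∀ s : ℝ, 0 < s → HasDerivAt G (Complex.exp (Complex.I * ((s ^ 2 : ℝ) : ℂ)) -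
      Complex.exp (Complex.I * ((s ^ 2 : ℝ) : ℂ)) * (1 / (2 * Complex.I)) * ((s : ℂ) ^ 2)⁻¹) s := by
    intro s hs
    have hs' : (s : ℂ) ≠ 0 := by exact_mod_cast hs.ne'
    have e1 : HasDerivAt (fun s : ℝ => Complex.exp (Complex.I * ((s ^ 2 : ℝ) : ℂ)))
        (Complex.exp (Complex.I * ((s ^ 2 : ℝ) : ℂ)) * (Complex.I * ((2 * s : ℝ) : ℂ))) s := by
      have : HasDerivAt (fun s : ℝ => s ^ 2) (2 * s) s := by simpa using hasDerivAt_pow 2 s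
      exact (this.ofReal_comp.const_mul Complex.I).cexp
    have e2 : HasDerivAt (fun s : ℝ => ((s : ℂ))⁻¹) (-((s : ℂ) ^ 2)⁻¹) s :=
      (hasDerivAt_inv hs').comp_ofReal
    convert! (e1.mul_const (1 / (2 * Complex.I))).mul e2 using 1
    push_cast
    field_simp
    ring
  have key := image_norm_le_of_norm_deriv_right_le_deriv_boundary' (a := 1) (b := x)
    (f := fun t => (∫ s in (0:ℝ)..t, Complex.exp (Complex.I * ((s ^ 2 : ℝ) : ℂ))) - G t)
    (f' := fun s =>
      Complex.exp (Complex.I * ((s ^ 2 : ℝ) : ℂ)) * (1 / (2 * Complex.I)) * ((s : ℂ) ^ 2)⁻¹)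
    (B := fun s => 2 - 1 / 2 * s⁻¹) (B' := fun s => 1 / 2 * (s ^ 2)⁻¹)
  have hd : ∀ s : ℝ, 1 ≤ s → HasDerivAt
      (fun t => (∫ s in (0:ℝ)..t, Complex.exp (Complex.I * ((s ^ 2 : ℝ) : ℂ))) - G t)
      (Complex.exp (Complex.I * ((s ^ 2 : ℝ) : ℂ)) * (1 / (2 * Complex.I)) * ((s : ℂ) ^ 2)⁻¹)
      s := fun s hs => by
    convert! (hcont.integral_hasStrictDerivAt 0 s).hasDerivAt.sub
      (hGd s (by linarith)) using 1
    ring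
  have hB : ∀ s : ℝ, 1 ≤ s →
      HasDerivAt (fun s : ℝ => 2 - 1 / 2 * s⁻¹) (1 / 2 * (s ^ 2)⁻¹) s := fun s hs => by
    convert! ((hasDerivAt_inv (by linarith : s ≠ 0)).const_mul (1 / 2 : ℝ)).const_sub 2 using 1
    ring
  have := key (fun s hs => (hd s hs.1).continuousAt.continuousWithinAt)
    (fun s hs => (hd s hs.1).hasDerivWithinAt)
    (by
      refine (norm_sub_le _ _).trans ?_
      rw [hGn 1 one_pos]
      linarith [htriv 1 zero_le_one])
    (fun s hs => (hB s hs.1).continuousAt.continuousWithinAt)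
    (fun s hs => (hB s hs.1).hasDerivWithinAt)
    (fun s hs => by
      have hs0 : 0 < s := by linarith [hs.1]
      simp only [norm_mul, hnorm, norm_div, norm_inv, norm_pow, Complex.norm_I, norm_one,
        Complex.norm_real, Real.norm_eq_abs, abs_of_pos hs0, Complex.norm_two]
      simp)
    (Set.right_mem_Icc.mpr h1)
  have h2 : (0:ℝ) < x⁻¹ := by positivity
  have h3 := norm_le_norm_sub_add
    (∫ s in (0:ℝ)..x, Complex.exp (Complex.I * ((s ^ 2 : ℝ) : ℂ))) (G x)
  rw [hGn x (by linarith)] at h3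
  have h4 : 1 / (2 * x) = 1 / 2 * x⁻¹ := by field_simp
  linarith

lemma norm_fresnel_le (u v : ℝ) :
    ‖∫ s in u..v, Complex.exp (Complex.I * ((s ^ 2 : ℝ) : ℂ))‖ ≤ 5 := by
  have hcont : Continuous fun s : ℝ => Complex.exp (Complex.I * ((s ^ 2 : ℝ) : ℂ)) := by
    fun_prop
  have h : ∀ x : ℝ, ‖∫ s in (0:ℝ)..x, Complex.exp (Complex.I * ((s ^ 2 : ℝ) : ℂ))‖ ≤ 5 / 2 := by
    intro x
    rcases le_total 0 x with hx | hx
    · exact norm_fresnel_le_of_nonneg x hx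
    · have := intervalIntegral.integral_comp_neg (a := 0) (b := x)
        (fun s : ℝ => Complex.exp (Complex.I * ((s ^ 2 : ℝ) : ℂ)))
      simp only [neg_sq, neg_zero] at this
      rw [this, intervalIntegral.integral_symm, norm_neg]
      exact norm_fresnel_le_of_nonneg _ (by linarith)
  rw [← intervalIntegral.integral_interval_sub_left (hcont.intervalIntegrable 0 v)
    (hcont.intervalIntegrable 0 u)]
  refine (norm_sub_le _ _).trans ?_
  linarith [h u, h v]

/-- The van der Corput bound for a quadratic phase, uniform in the linear coefficient `b`. -/
lemma norm_integral_quadratic_phase_le (b lam : ℝ) (hlam : 0 < lam) (u v : ℝ) :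
    ‖∫ y in u..v, Complex.exp (Complex.I * ((lam * y ^ 2 - b * y : ℝ) : ℂ))‖ ≤
      5 * lam ^ (-(1 / 2 : ℝ)) := by
  have hs : 0 < √lam := Real.sqrt_pos.mpr hlam
  have hss : √lam ^ 2 = lam := Real.sq_sqrt hlam.le
  -- `lam y² - b y = (√lam y - b / (2√lam))² - b² / (4 lam)`
  have hpt : ∀ y : ℝ, Complex.exp (Complex.I * ((lam * y ^ 2 - b * y : ℝ) : ℂ)) =
      Complex.exp (((-(b ^ 2 / (4 * lam)) : ℝ) : ℂ) * Complex.I) *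
      Complex.exp (Complex.I * (((√lam * y - b / (2 * √lam)) ^ 2 : ℝ) : ℂ)) := by
    intro y
    rw [← Complex.exp_add, mul_comm _ Complex.I, ← mul_add, ← Complex.ofReal_add]
    congr 3
    have : (√lam * y - b / (2 * √lam)) ^ 2 = √lam ^ 2 * y ^ 2 - b * y + b ^ 2 / (4 * √lam ^ 2) := by
      field_simp
      ring
    rw [this, hss]
    ring
  simp_rw [hpt]
  rw [intervalIntegral.integral_const_mul, norm_mul, Complex.norm_exp_ofReal_mul_I, one_mul,
    intervalIntegral.integral_comp_mul_sub
      (fun s : ℝ => Complex.exp (Complex.I * ((s ^ 2 : ℝ) : ℂ))) hs.ne', norm_smul,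
    Real.rpow_neg hlam.le, ← Real.sqrt_eq_rpow, norm_inv, Real.norm_eq_abs, abs_of_pos hs,
    mul_comm]
  gcongr
  exact norm_fresnel_le _ _

lemma norm_fourierCoeffOn_le {a b : ℝ} (hab : a < b) (f : ℝ → ℂ) (M : ℝ)
    (hf : ∀ x, ‖f x‖ ≤ M) (n : ℤ) : ‖fourierCoeffOn hab f n‖ ≤ M := by
  have hba : 0 < b - a := sub_pos.mpr hab
  rw [fourierCoeffOn_eq_integral, norm_smul, Real.norm_eq_abs, abs_of_pos (by positivity)]
  have := intervalIntegral.norm_integral_le_of_norm_le_const (a := a) (b := b) (C := M)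
    (f := fun x => fourier (-n) (x : AddCircle (b - a)) • f x) (fun x _ => by
      rw [norm_smul, fourier_apply, Circle.norm_coe, one_mul]
      exact hf x)
  rw [abs_of_pos hba] at this
  calc 1 / (b - a) * _ ≤ 1 / (b - a) * (M * (b - a)) := by gcongr
    _ = M := by field_simp

/-- Each integration by parts over a full period gains a factor `ε / (2π|n|)`. -/
lemma norm_fourierCoeffOn_eq_of_periodic {ε : ℝ} (hε : 0 < ε) {f : ℝ → ℂ} (hf : ContDiff ℝ 1 f)
    (hper : f ε = f 0) {n : ℤ} (hn : n ≠ 0) :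
    ‖fourierCoeffOn hε f n‖ = ε / (2 * π * |(n : ℝ)|) * ‖fourierCoeffOn hε (deriv f) n‖ := by
  rw [fourierCoeffOn_of_hasDerivAt hε hn
    (fun x _ => (hf.differentiable one_ne_zero x).hasDerivAt)
    ((hf.continuous_deriv le_rfl).intervalIntegrable _ _), hper]
  simp [abs_of_pos hε, abs_of_pos Real.pi_pos]
  ring

/-- For an amplitude stable at scale `ε`, the Fourier coefficients decay at a rate which does not
depend on `ε`. -/
lemma norm_fourierCoeffOn_le_of_stable {ε : ℝ} (hε : 0 < ε) {ψ : ℝ → ℂ} (hψ : ContDiff ℝ 2 ψ)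
    (hper : ∀ y, ψ (y + ε) = ψ y) (h0 : ∀ y, ‖ψ y‖ ≤ 1)
    (h2 : ∀ y, ‖deriv (deriv ψ) y‖ ≤ ε⁻¹ ^ 2) (n : ℤ) :
    ‖fourierCoeffOn hε ψ n‖ ≤ (if n = 0 then 1 else 0) + 1 / (n : ℝ) ^ 2 := by
  rcases eq_or_ne n 0 with rfl | hn
  · simpa using norm_fourierCoeffOn_le hε ψ 1 h0 0
  have hd : ContDiff ℝ 1 (deriv ψ) :=
    (contDiff_succ_iff_deriv.mp (show ContDiff ℝ (1 + 1) ψ by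
      rw [one_add_one_eq_two]; exact hψ)).2.2
  have hdper : deriv ψ ε = deriv ψ 0 := by
    have : (fun y => ψ (y + ε)) = ψ := funext hper
    have h := deriv_comp_add_const ψ ε 0
    rw [this, zero_add] at h
    exact h.symm
  have hψper : ψ ε = ψ 0 := by simpa using hper 0
  have hn' : 0 < |(n : ℝ)| := abs_pos.mpr (by exact_mod_cast hn)
  rw [norm_fourierCoeffOn_eq_of_periodic hε (hψ.of_le (by norm_num)) hψper hn,
    norm_fourierCoeffOn_eq_of_periodic hε hd hdper hn, if_neg hn, zero_add, ← sq_abs]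
  calc ε / (2 * π * |(n : ℝ)|) * (ε / (2 * π * |(n : ℝ)|) * ‖fourierCoeffOn hε (deriv (deriv ψ)) n‖)
      ≤ ε / (2 * π * |(n : ℝ)|) * (ε / (2 * π * |(n : ℝ)|) * ε⁻¹ ^ 2) := by
        gcongr
        exact norm_fourierCoeffOn_le hε _ _ h2 n
    _ = 1 / (2 * π) ^ 2 * (1 / |(n : ℝ)| ^ 2) := by field_simp
    _ ≤ 1 * (1 / |(n : ℝ)| ^ 2) := by
        gcongr
        rw [div_le_one (by positivity)]
        nlinarith [Real.pi_gt_three]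
    _ = _ := one_mul _

/-- Pointwise Fourier expansion of a continuous `ε`-periodic function on the line whose
coefficients are summable. -/
lemma hasSum_fourier_of_periodic {ε : ℝ} (hε : 0 < ε) {ψ : ℝ → ℂ} (hψ : Continuous ψ)
    (hper : Function.Periodic ψ ε) (hsum : Summable (fourierCoeffOn hε ψ)) (y : ℝ) :
    HasSum (fun n : ℤ => fourierCoeffOn hε ψ n *
      Complex.exp (Complex.I * ((2 * π * n / ε * y : ℝ) : ℂ))) (ψ y) := by
  have : Fact (0 < ε) := ⟨hε⟩
  let f : C(AddCircle ε, ℂ) := ⟨hper.lift, continuous_coinduced_dom.mpr hψ⟩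
  have hf : ∀ x : ℝ, f (x : AddCircle ε) = ψ x := fun x => hper.lift_coe x
  have hc : ∀ n, fourierCoeff f n = fourierCoeffOn hε ψ n := fun n => by
    rw [fourierCoeff_eq_intervalIntegral f n 0, fourierCoeffOn_eq_integral]
    simp only [zero_add, sub_zero, hf, fourier_coe_apply]
  have h := has_pointwise_sum_fourier_series_of_summable (f := f)
    (by rwa [show fourierCoeff f = fourierCoeffOn hε ψ from funext hc]) (y : AddCircle ε)
  rw [hf] at h
  convert! h using 2 with n
  rw [hc, fourier_coe_apply, smul_eq_mul]
  congr 2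
  push_cast
  ring

/-- Stationary phase / van der Corput for amplitudes stable at scale `ε`: if `ψ` is
`ε`-periodic, `|ψ| ≤ 1`, `|ψ′| ≤ ε^{−1}`, `|ψ″| ≤ ε^{−2}`, then for `1 ≤ λ ≤ ε^{−1/(1−δ)}`,
`|∫_{−1}^{1} ψ(y) e^{i(λy² − ay)} dy| ≤ C_δ λ^{−1/2}`, with `C_δ` independent of `ε`. -/
theorem periodic_stationary_phase :
    ∀ δ : ℝ, δ ∈ Set.Ioc (0:ℝ) (1/2) → ∃ C : ℝ, ∀ ε : ℝ, ε ∈ Set.Ioc (0:ℝ) 1 →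
      ∀ ψ : ℝ → ℂ, ContDiff ℝ 2 ψ →
      (∀ y : ℝ, ψ (y + ε) = ψ y) →
      (∀ y : ℝ, ‖ψ y‖ ≤ 1) →
      (∀ y : ℝ, ‖deriv ψ y‖ ≤ ε⁻¹) →
      (∀ y : ℝ, ‖deriv (deriv ψ) y‖ ≤ ε⁻¹ ^ 2) →
      ∀ a lam : ℝ, 1 ≤ lam → lam ≤ ε ^ (-(1 / (1 - δ))) →
        ‖∫ y in (-1:ℝ)..1,
            ψ y * Complex.exp (Complex.I * ((lam * y ^ 2 - a * y : ℝ) : ℂ))‖ ≤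
          C * lam ^ (-(1 / 2 : ℝ)) := by
  intro δ _
  set β : ℤ → ℝ := fun n => (if n = 0 then 1 else 0) + 1 / (n : ℝ) ^ 2 with hβ
  have hβs : Summable β :=
    (hasSum_ite_eq (0 : ℤ) (1 : ℝ)).summable.add
      (Real.summable_one_div_int_pow.mpr one_lt_two)
  refine ⟨5 * ∑' n, β n, ?_⟩
  intro ε hε ψ hψ hper h0 _ h2 a lam hlam _
  have hε0 : 0 < ε := hε.1
  have hlam0 : 0 < lam := by linarith
  set c := fourierCoeffOn hε0 ψ with hc
  have hcβ : ∀ n, ‖c n‖ ≤ β n := norm_fourierCoeffOn_le_of_stable hε0 hψ hper h0 h2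
  have hcs : Summable fun n => ‖c n‖ := Summable.of_nonneg_of_le (fun _ => norm_nonneg _) hcβ hβs
  -- the `n`-th Fourier mode is absorbed into the linear part of the phase
  have hpt : ∀ y : ℝ, HasSum (fun n : ℤ => c n * Complex.exp (Complex.I *
      ((lam * y ^ 2 - (a - 2 * π * n / ε) * y : ℝ) : ℂ)))
      (ψ y * Complex.exp (Complex.I * ((lam * y ^ 2 - a * y : ℝ) : ℂ))) := by
    intro y
    convert! (hasSum_fourier_of_periodic hε0 hψ.continuous hper hcs.of_norm y).mul_right
      (Complex.exp (Complex.I * ((lam * y ^ 2 - a * y : ℝ) : ℂ))) using 2 with n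
    rw [mul_assoc (fourierCoeffOn hε0 ψ n), ← Complex.exp_add, ← mul_add, ← Complex.ofReal_add]
    congr 4
    ring
  have hnorm : ∀ t : ℝ, ‖Complex.exp (Complex.I * (t : ℂ))‖ = 1 := fun t => by
    rw [mul_comm]; exact Complex.norm_exp_ofReal_mul_I _
  have hint := intervalIntegral.hasSum_integral_of_dominated_convergence
    (μ := MeasureTheory.volume) (a := -1) (b := 1)
    (F := fun (n : ℤ) (y : ℝ) => c n * Complex.exp (Complex.I *
      ((lam * y ^ 2 - (a - 2 * π * n / ε) * y : ℝ) : ℂ)))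
    (fun n _ => ‖c n‖)
    (fun n => Continuous.aestronglyMeasurable (by fun_prop))
    (fun n => Filter.Eventually.of_forall fun y _ => by rw [norm_mul, hnorm, mul_one])
    (Filter.Eventually.of_forall fun _ _ => hcs)
    intervalIntegrable_const
    (Filter.Eventually.of_forall fun y _ => hpt y)
  have hbound := hint.norm_le_of_bounded (hβs.hasSum.mul_right (5 * lam ^ (-(1 / 2 : ℝ))))
    (fun n => by
      rw [intervalIntegral.integral_const_mul, norm_mul]
      exact mul_le_mul (hcβ n) (norm_integral_quadratic_phase_le _ lam hlam0 _ _)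
        (norm_nonneg _) ((norm_nonneg _).trans (hcβ n)))
  refine hbound.trans_eq ?_
  ring
end
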